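/- arXiv:1709.10384 — 3 statements merged into one kernel-verified Lean document; each statement's English description precedes it below -/
import Mathlib

section
/- Suppose Assumption (Coefficients) holds, that g ∈ C(ℝⁿ) is bounded, that c, f, φ ∈ C([0,T] × ℝⁿ) with c bounded, that the compatibility condition g(x) ≥ φ(T,x) holds for all x ∈ ℝⁿ, and that lim_{y→0} F(x,y) = 0 for every x ∈ ℝⁿ. Then the evolution obstacle problem min{−w_t − Lw + c w − f, w − φ} = 0 on [0,T) × ℝⁿ with final condition w(T,·) = g has at most one bounded viscosity solution: if v₁ and v₂ are bounded viscosity solutions, then v₁ = v₂ on [0,T] × ℝⁿ. -/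
/-!
Uniqueness follows from comparison: a subsolution `v₁` lies below a supersolution `v₂`. Write
`h(z) = min(|z|, |z|²)`. By the Lipschitz condition on `F` in `L²(ν)`, `h(F(x,·))` is either
`ν`-integrable for every `x` or for no `x`.

In the integrable case (`comparison`) one doubles variables. If `e^{λt}(v₁ - v₂)` were positive
somewhere, with `λ > sup |c|`, one maximises
`e^{λt} v₁(t,x) - e^{λs} v₂(s,y) - (|x - y|² + (t - s)²)/(2ε) - η log(1 + |x|²)`
(`exists_max_doubled`, `doubling_limit`). Only second order derivatives of the penalisation enter
through small jumps, so no theorem on sums is needed: in each viscosity inequality the test function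
may be replaced by the solution itself in the large jumps (`exists_testFn`, `key_ineq`), the
large-jump terms of the two inequalities are compared pointwise using maximality, and the small-jump
terms vanish when the truncation level tends to zero (`doubling_ineq`). The errors are of order
`|x - y|²/ε`, which tends to zero, and `η`, which is small; this contradicts `λ + c ≥ 1`. Where
`v₁` lies below the obstacle, `φ ≤ v₂` (`IsEvolSupersolution.obstacle_le`) gives the contradiction
directly, and the final condition keeps the maximum points away from `t = T`.

In the non-integrable case, adding `√(1 + |x - x₀|²) - 1` to a test function whose nonlocal integrand
is integrable makes the integrand non-integrable without changing the first order jet. The Bochner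
integral in `LopEvol` is then `0` by convention, so `v₁` and `v₂` solve the first order problem with
`ν = 0` (`exists_touch_drift`), to which `comparison` applies.
-/

open MeasureTheory
open scoped RealInnerProductSpace ENNReal

noncomputable section

/-- `ℝⁿ` with the Euclidean inner product and norm. -/
abbrev En (n : ℕ) := EuclideanSpace ℝ (Fin n)

/-- Test functions for the evolution problem: jointly continuous, `C¹` in `t` and `C²` in `x`,
with bounded derivatives. -/
def IsTestFnEvol {n : ℕ} (u : ℝ → En n → ℝ) : Prop :=
  Continuous (fun p : ℝ × En n => u p.1 p.2) ∧
  (∀ x, Differentiable ℝ (fun t => u t x)) ∧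
  (∃ M, ∀ t x, |deriv (fun s => u s x) t| ≤ M) ∧
  (∀ t, ContDiff ℝ 2 (u t)) ∧
  (∃ M, ∀ t x, ‖fderiv ℝ (u t) x‖ ≤ M) ∧
  (∃ M, ∀ t x, ‖fderiv ℝ (fderiv ℝ (u t)) x‖ ≤ M)

/-- The nonlocal operator acting in the spatial variable:
`Lu(t,x) = b(x)·∇ₓu(t,x) + ∫_{ℝⁿ\{0}} (u(t, x + F(x,y)) − u(t,x) − ∇ₓu(t,x)·F(x,y)) ν(dy)`. -/
def LopEvol {n : ℕ} (ν : Measure (En n)) (F : En n → En n → En n) (b : En n → En n)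
    (u : ℝ → En n → ℝ) (t : ℝ) (x : En n) : ℝ :=
  ⟪b x, gradient (u t) x⟫ +
    ∫ y in {(0 : En n)}ᶜ, (u t (x + F x y) - u t x - ⟪gradient (u t) x, F x y⟫) ∂ν

/-- Assumption (Coefficients): there are `K > 0` and a measurable `ρ : ℝⁿ → [0,∞)` such that
(i) `∫ |F(x₁,y) − F(x₂,y)|² ν(dy) ≤ K|x₁ − x₂|²`;
(ii) `sup_{z ∈ B(0,|y|)} |F(x,z)| ≤ ρ(y)` and `∫ (max(|y|, ρ(y)))² ν(dy) ≤ K`;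
(iii) `b` is bounded and Lipschitz. -/
def CoefficientsAssumption {n : ℕ} (ν : Measure (En n)) (F : En n → En n → En n)
    (b : En n → En n) (ρ : En n → ℝ) (K : ℝ) : Prop :=
  0 < K ∧
  Measurable (Function.uncurry F) ∧ Measurable ρ ∧ (∀ y, 0 ≤ ρ y) ∧
  (∀ x₁ x₂ : En n,
    ∫⁻ y in {(0 : En n)}ᶜ, ENNReal.ofReal (‖F x₁ y - F x₂ y‖ ^ 2) ∂ν
      ≤ ENNReal.ofReal (K * ‖x₁ - x₂‖ ^ 2)) ∧
  (∀ x y : En n, ∀ z ∈ Metric.ball (0 : En n) ‖y‖, ‖F x z‖ ≤ ρ y) ∧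
  (∫⁻ y in {(0 : En n)}ᶜ, ENNReal.ofReal ((max ‖y‖ (ρ y)) ^ 2) ∂ν ≤ ENNReal.ofReal K) ∧
  (∃ M, ∀ x, ‖b x‖ ≤ M) ∧ (∃ β : NNReal, LipschitzWith β b)

/-- A bounded, continuous (on `[0,T] × ℝⁿ`) function `v` is a viscosity subsolution of the
evolution obstacle problem `min{−v_t − Lv + c v − f, v − φ} = 0` on `[0,T) × ℝⁿ` with final
condition `v(T,·) = g`. -/
def IsEvolSubsolution {n : ℕ} (T : ℝ) (ν : Measure (En n)) (F : En n → En n → En n)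
    (b : En n → En n) (c f φ : ℝ → En n → ℝ) (g : En n → ℝ) (v : ℝ → En n → ℝ) : Prop :=
  ContinuousOn (fun p : ℝ × En n => v p.1 p.2) (Set.Icc 0 T ×ˢ Set.univ) ∧
  (∃ M, ∀ t ∈ Set.Icc (0 : ℝ) T, ∀ x, |v t x| ≤ M) ∧
  (∀ x, v T x ≤ g x) ∧
  ∀ u : ℝ → En n → ℝ, IsTestFnEvol u → ∀ t₀ ∈ Set.Ico (0 : ℝ) T, ∀ x₀ : En n,
    (∀ t ∈ Set.Icc (0 : ℝ) T, ∀ x, v t x - u t x ≤ v t₀ x₀ - u t₀ x₀) → u t₀ x₀ = v t₀ x₀ →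
    min (-(deriv (fun s => u s x₀) t₀) - LopEvol ν F b u t₀ x₀
          + c t₀ x₀ * u t₀ x₀ - f t₀ x₀)
        (u t₀ x₀ - φ t₀ x₀) ≤ 0

/-- A bounded, continuous (on `[0,T] × ℝⁿ`) function `v` is a viscosity supersolution of the
evolution obstacle problem `min{−v_t − Lv + c v − f, v − φ} = 0` on `[0,T) × ℝⁿ` with final
condition `v(T,·) = g`. -/
def IsEvolSupersolution {n : ℕ} (T : ℝ) (ν : Measure (En n)) (F : En n → En n → En n)
    (b : En n → En n) (c f φ : ℝ → En n → ℝ) (g : En n → ℝ) (v : ℝ → En n → ℝ) : Prop :=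
  ContinuousOn (fun p : ℝ × En n => v p.1 p.2) (Set.Icc 0 T ×ˢ Set.univ) ∧
  (∃ M, ∀ t ∈ Set.Icc (0 : ℝ) T, ∀ x, |v t x| ≤ M) ∧
  (∀ x, g x ≤ v T x) ∧
  ∀ u : ℝ → En n → ℝ, IsTestFnEvol u → ∀ t₀ ∈ Set.Ico (0 : ℝ) T, ∀ x₀ : En n,
    (∀ t ∈ Set.Icc (0 : ℝ) T, ∀ x, v t₀ x₀ - u t₀ x₀ ≤ v t x - u t x) → u t₀ x₀ = v t₀ x₀ →
    0 ≤ min (-(deriv (fun s => u s x₀) t₀) - LopEvol ν F b u t₀ x₀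
          + c t₀ x₀ * u t₀ x₀ - f t₀ x₀)
        (u t₀ x₀ - φ t₀ x₀)

/-- A viscosity solution: both a viscosity subsolution and a viscosity supersolution. -/
def IsEvolSolution {n : ℕ} (T : ℝ) (ν : Measure (En n)) (F : En n → En n → En n)
    (b : En n → En n) (c f φ : ℝ → En n → ℝ) (g : En n → ℝ) (v : ℝ → En n → ℝ) : Prop :=
  IsEvolSubsolution T ν F b c f φ g v ∧ IsEvolSupersolution T ν F b c f φ g v

/-! ### Approximating test functions -/

lemma isTestFnEvol_of_compactSupport {n : ℕ} (G : ℝ × En n → ℝ) (hG : ContDiff ℝ 2 G)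
    (hGs : HasCompactSupport G) (m : ℝ) :
    IsTestFnEvol (fun t x => m + G (t, x)) := by
  obtain ⟨C₁, hC₁⟩ := hG.lipschitzWith_of_hasCompactSupport hGs (by norm_num)
  obtain ⟨C₂, hC₂⟩ := (hG.fderiv_right (m := 1) (by norm_num)).lipschitzWith_of_hasCompactSupport
    (hGs.fderiv ℝ) (by norm_num)
  have hd : Differentiable ℝ G := hG.differentiable (by norm_num)
  have hfd : ∀ t : ℝ, fderiv ℝ (fun x : En n => m + G (t, x)) =
      fun x => (fderiv ℝ G (t, x)).comp (ContinuousLinearMap.inr ℝ ℝ (En n)) := by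
    intro t
    funext x
    have h1 : HasFDerivAt (fun x : En n => (t, x)) (ContinuousLinearMap.inr ℝ ℝ (En n)) x :=
      hasFDerivAt_prodMk_right t x
    exact (((hd (t, x)).hasFDerivAt.comp x h1).const_add m).fderiv
  refine ⟨by fun_prop, fun x => ?_, ⟨C₁, fun t x => ?_⟩, fun t => ?_, ⟨C₁, fun t x => ?_⟩,
    ⟨C₂, fun t x => ?_⟩⟩
  · have : Differentiable ℝ (fun t : ℝ => (t, x)) := by fun_prop
    exact (hd.comp this).const_add m
  · have h : LipschitzWith C₁ (fun s => m + G (s, x)) := by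
      refine LipschitzWith.of_dist_le_mul fun a b => ?_
      have := hC₁.dist_le_mul (a, x) (b, x)
      simpa [Prod.dist_eq] using this
    simpa using norm_deriv_le_of_lipschitz h (x₀ := t)
  · fun_prop
  · have h : LipschitzWith C₁ (fun x => m + G (t, x)) := by
      refine LipschitzWith.of_dist_le_mul fun a b => ?_
      have := hC₁.dist_le_mul (t, a) (t, b)
      simpa [Prod.dist_eq] using this
    exact norm_fderiv_le_of_lipschitz ℝ h
  · rw [hfd t]
    refine norm_fderiv_le_of_lipschitz ℝ (LipschitzWith.of_dist_le_mul fun a b => ?_)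
    have h2 := hC₂.dist_le_mul (t, a) (t, b)
    rw [dist_eq_norm] at h2 ⊢
    rw [← ContinuousLinearMap.sub_comp]
    refine (ContinuousLinearMap.opNorm_comp_le _ _).trans ?_
    have h3 : ‖ContinuousLinearMap.inr ℝ ℝ (En n)‖ ≤ 1 := by
      refine ContinuousLinearMap.opNorm_le_bound _ zero_le_one fun x => ?_
      simp [Prod.norm_def]
    have h4 : dist (t, a) (t, b) = dist a b := by simp [Prod.dist_eq]
    rw [h4] at h2
    exact (mul_le_of_le_one_right (norm_nonneg _) h3).trans h2

lemma exists_cont_ext {n : ℕ} {T : ℝ} (hT : 0 ≤ T) (v : ℝ → En n → ℝ)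
    (hv : ContinuousOn (fun p : ℝ × En n => v p.1 p.2) (Set.Icc 0 T ×ˢ Set.univ)) {M : ℝ}
    (hM : ∀ t ∈ Set.Icc (0 : ℝ) T, ∀ x, |v t x| ≤ M) :
    ∃ V : ℝ × En n → ℝ, Continuous V ∧ (∀ p, |V p| ≤ M) ∧
      ∀ t ∈ Set.Icc (0 : ℝ) T, ∀ x, V (t, x) = v t x := by
  refine ⟨fun p => v (Set.projIcc 0 T hT p.1) p.2, ?_, fun p => hM _ (Subtype.prop _) _, ?_⟩
  · have : Continuous (fun p : ℝ × En n => ((Set.projIcc 0 T hT p.1 : ℝ), p.2)) := by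
      have := continuous_projIcc (h := hT)
      fun_prop
    exact hv.comp_continuous this (fun p => ⟨Subtype.prop _, trivial⟩)
  · intro t ht x
    simp [Set.projIcc_of_mem hT ht]

/-- Let `Q` be a `C²` function touching `v` from above at `(t₀, x₀)`, with a one-sided quadratic bound
there. Then some test function `u ≥ v` coincides with `Q` near `(t₀, x₀)` and is `ε`-close to `v`
on `ε ≤ |x - x₀| ≤ 1/ε` at time `t₀`, with quadratic and uniform bounds independent of `ε`. It is
obtained by gluing `Q`, a smooth approximation of `v` from above, and a constant. -/
lemma exists_testFn {n : ℕ} {T : ℝ} (v : ℝ → En n → ℝ)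
    (hv : ContinuousOn (fun p : ℝ × En n => v p.1 p.2) (Set.Icc 0 T ×ˢ Set.univ)) {M : ℝ}
    (hM : ∀ t ∈ Set.Icc (0 : ℝ) T, ∀ x, |v t x| ≤ M)
    {t₀ : ℝ} (ht₀ : t₀ ∈ Set.Icc (0 : ℝ) T) {x₀ : En n}
    (Q : ℝ × En n → ℝ) (hQ : ContDiff ℝ 2 Q)
    (hvQ : ∀ t ∈ Set.Icc (0 : ℝ) T, ∀ x, v t x ≤ Q (t, x))
    (hQM : ∀ p ∈ Metric.closedBall (t₀, x₀) 1, |Q p| ≤ M)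
    {p : En n} {C : ℝ} (hC : 0 < C)
    (hQC : ∀ z, Q (t₀, x₀ + z) ≤ v t₀ x₀ + ⟪p, z⟫ + C * ‖z‖ ^ 2)
    {ε : ℝ} (hε : 0 < ε) :
    ∃ u : ℝ → En n → ℝ, IsTestFnEvol u ∧ (∀ t ∈ Set.Icc (0 : ℝ) T, ∀ x, v t x ≤ u t x) ∧
      (∀ᶠ q in nhds (t₀, x₀), u q.1 q.2 = Q q) ∧
      (∀ z, u t₀ (x₀ + z) ≤ v t₀ x₀ + ⟪p, z⟫ + 2 * C * ‖z‖ ^ 2) ∧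
      (∀ x, |u t₀ x| ≤ M + 1) ∧
      (∀ z, ε ≤ ‖z‖ → ‖z‖ ≤ 1 / ε → |u t₀ (x₀ + z) - v t₀ (x₀ + z)| ≤ ε) := by
  obtain ⟨V, hVc, hVM, hVv⟩ := exists_cont_ext (ht₀.1.trans ht₀.2) v hv hM
  have hM0 : 0 ≤ M := (abs_nonneg _).trans (hVM (t₀, x₀))
  set r : ℝ := min 1 ε with hr
  have hr0 : 0 < r := lt_min one_pos hε
  -- beyond radius `R` the quadratic bound exceeds the constant `M + 1`
  set R : ℝ := 1 + 1 / ε + (‖p‖ + 2 * M + 1) / (2 * C) with hR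
  have hRp : 0 ≤ (‖p‖ + 2 * M + 1) / (2 * C) := by positivity
  have hR1 : 1 ≤ R := by
    have : 0 ≤ 1 / ε := by positivity
    linarith
  have hRε : 1 / ε < R := by linarith
  have hRC : ‖p‖ + 2 * M + 1 ≤ 2 * C * R := by
    have : (‖p‖ + 2 * M + 1) / (2 * C) ≤ R := by
      have : 0 ≤ 1 / ε := by positivity
      linarith
    rwa [div_le_iff₀' (by positivity)] at this
  -- an error `e ≤ C (r/2)²` is absorbed by the second copy of `C |z|²` where `χ ≠ 1`
  set e : ℝ := min (min 1 ε) (C * (r / 2) ^ 2) with he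
  have he0 : 0 < e := by positivity
  have he1 : e ≤ 1 := (min_le_left _ _).trans (min_le_left _ _)
  have heε : e ≤ ε := (min_le_left _ _).trans (min_le_right _ _)
  have heC : e ≤ C * (r / 2) ^ 2 := min_le_right _ _
  obtain ⟨W, hW, hWd, -⟩ := (hVc.add continuous_const : Continuous (fun q => V q + e / 2)).exists_contDiff_approx 2
    (continuous_const : Continuous fun _ : ℝ × En n => e / 2) (fun _ => by positivity)
  have hW1 : ∀ q, V q ≤ W q ∧ W q ≤ V q + e := by
    intro q
    have : dist (W q) (V q + e / 2) < e / 2 := hWd q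
    rw [Real.dist_eq, abs_lt] at this
    constructor <;> linarith [this.1, this.2]
  -- `u = χ Q + (1 - χ) (ζ W + (1 - ζ) (M + 1))`
  let χ : ContDiffBump (t₀, x₀) := ⟨r / 2, r, by positivity, by linarith⟩
  let ζ : ContDiffBump (t₀, x₀) := ⟨R, R + 1, by positivity, by linarith⟩
  set G : ℝ × En n → ℝ := fun q => χ q * (Q q - (M + 1)) + (1 - χ q) * (ζ q * (W q - (M + 1)))
    with hG
  have hGd : ContDiff ℝ 2 G := by
    have h1 : ContDiff ℝ 2 χ := χ.contDiff
    have h2 : ContDiff ℝ 2 ζ := ζ.contDiff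
    have h3 : ContDiff ℝ 2 W := hW
    fun_prop
  have hGs : HasCompactSupport G :=
    (χ.hasCompactSupport.mul_right).add (HasCompactSupport.mul_left ζ.hasCompactSupport.mul_right)
  have key : ∀ q, (M + 1) + G q = χ q * Q q + (1 - χ q) * (ζ q * W q + (1 - ζ q) * (M + 1)) := by
    intro q; simp only [hG]; ring
  have hχ0 := fun q => χ.nonneg (x := q)
  have hχ1 := fun q => χ.le_one (x := q)
  have hζ0 := fun q => ζ.nonneg (x := q)
  have hζ1 := fun q => ζ.le_one (x := q)
  have hdist : ∀ z, dist (t₀, x₀ + z) (t₀, x₀) = ‖z‖ := by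
    intro z; simp [Prod.dist_eq]
  have conv : ∀ a x y m : ℝ, 0 ≤ a → a ≤ 1 → (0 < a → x ≤ m) → (a < 1 → y ≤ m) →
      a * x + (1 - a) * y ≤ m := by
    intro a x y m h0 h1 hx hy
    rcases h0.eq_or_lt with h | h
    · subst h; linarith [hy one_pos]
    rcases h1.eq_or_lt with h' | h'
    · subst h'; linarith [hx one_pos]
    nlinarith [hx h, hy h']
  have convL : ∀ a x y m : ℝ, 0 ≤ a → a ≤ 1 → (0 < a → m ≤ x) → (a < 1 → m ≤ y) →
      m ≤ a * x + (1 - a) * y := by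
    intro a x y m h0 h1 hx hy
    have := conv a (-x) (-y) (-m) h0 h1 (fun h => by linarith [hx h]) (fun h => by linarith [hy h])
    linarith
  have hχball : ∀ q, 0 < χ q → dist q (t₀, x₀) < r := by
    intro q hq
    by_contra h
    rw [χ.zero_of_le_dist (not_lt.1 h)] at hq
    exact lt_irrefl _ hq
  have hχone : ∀ q, dist q (t₀, x₀) ≤ r / 2 → χ q = 1 := fun q hq => χ.one_of_mem_closedBall hq
  have hζone : ∀ q, dist q (t₀, x₀) ≤ R → ζ q = 1 := fun q hq => ζ.one_of_mem_closedBall hq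
  refine ⟨fun t x => (M + 1) + G (t, x), isTestFnEvol_of_compactSupport G hGd hGs _, ?_, ?_, ?_, ?_,
    ?_⟩
  · intro t ht x
    change _ ≤ (M + 1) + G (t, x)
    rw [key]
    refine convL _ _ _ _ (hχ0 _) (hχ1 _) (fun _ => hvQ t ht x) (fun _ => ?_)
    refine convL _ _ _ _ (hζ0 _) (hζ1 _) (fun _ => ?_) (fun _ => ?_)
    · rw [← hVv t ht x]; exact (hW1 _).1
    · linarith [(abs_le.1 (hM t ht x)).2]
  · filter_upwards [χ.eventuallyEq_one] with q hq
    change (M + 1) + G q = Q q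
    rw [key, hq]
    simp
  · intro z
    change (M + 1) + G _ ≤ _
    rw [key]
    have hz2 : 0 ≤ C * ‖z‖ ^ 2 := by positivity
    refine conv _ _ _ _ (hχ0 _) (hχ1 _) (fun _ => (hQC z).trans (by linarith)) (fun hlt => ?_)
    have hzr : r / 2 < ‖z‖ := by
      by_contra h
      rw [hχone _ (by rw [hdist]; exact not_lt.1 h)] at hlt
      exact lt_irrefl _ hlt
    refine conv _ _ _ _ (hζ0 _) (hζ1 _) (fun _ => ?_) (fun hlt => ?_)
    · have h1 := (hW1 (t₀, x₀ + z)).2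
      rw [hVv t₀ ht₀] at h1
      have h2 := (hvQ t₀ ht₀ (x₀ + z)).trans (hQC z)
      have h3 : C * (r / 2) ^ 2 ≤ C * ‖z‖ ^ 2 := by gcongr
      linarith
    · have hzR : R < ‖z‖ := by
        by_contra h
        rw [hζone _ (by rw [hdist]; exact not_lt.1 h)] at hlt
        exact lt_irrefl _ hlt
      have h1 := (abs_le.1 (hM t₀ ht₀ x₀)).1
      have h2 := (abs_le.1 (abs_real_inner_le_norm p z)).1
      have h3 : (‖p‖ + 2 * M + 1) * ‖z‖ ≤ 2 * C * R * ‖z‖ := by gcongr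
      have h4 : 2 * C * R * ‖z‖ ≤ 2 * C * ‖z‖ ^ 2 := by
        rw [pow_two, ← mul_assoc]; gcongr
      nlinarith
  · intro x
    change |(M + 1) + G _| ≤ _
    rw [key]
    have hQb : 0 < χ (t₀, x) → |Q (t₀, x)| ≤ M := fun h =>
      hQM _ (Metric.mem_closedBall.2 ((hχball _ h).le.trans (min_le_left _ _)))
    have hV := abs_le.1 (hVM (t₀, x))
    have hWx := hW1 (t₀, x)
    rw [abs_le]
    constructor
    · refine convL _ _ _ _ (hχ0 _) (hχ1 _) (fun h => by linarith [(abs_le.1 (hQb h)).1]) (fun _ => ?_)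
      exact convL _ _ _ _ (hζ0 _) (hζ1 _) (fun _ => by linarith) (fun _ => by linarith)
    · refine conv _ _ _ _ (hχ0 _) (hχ1 _) (fun h => by linarith [(abs_le.1 (hQb h)).2]) (fun _ => ?_)
      exact conv _ _ _ _ (hζ0 _) (hζ1 _) (fun _ => by linarith) (fun _ => le_rfl)
  · intro z hz1 hz2
    change |(M + 1) + G _ - _| ≤ _
    have h0 : χ (t₀, x₀ + z) = 0 :=
      χ.zero_of_le_dist (by rw [hdist]; exact (min_le_right _ _).trans hz1)
    have h1 : ζ (t₀, x₀ + z) = 1 := hζone _ (by rw [hdist]; exact hz2.trans hRε.le)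
    rw [key, h0, h1, ← hVv t₀ ht₀]
    have := hW1 (t₀, x₀ + z)
    rw [abs_le]
    constructor <;> linarith

/-! ### Viscosity inequality with `v` inserted in the large jumps -/

/-- The truncated square `min(|z|, |z|²)`. Its integrability along `F(x,·)` is what makes the
nonlocal term of every test function integrable. -/
def hmin {n : ℕ} (z : En n) : ℝ := min ‖z‖ (‖z‖ ^ 2)

lemma hmin_nonneg {n : ℕ} (z : En n) : 0 ≤ hmin z := le_min (norm_nonneg _) (by positivity)

lemma continuous_hmin {n : ℕ} : Continuous (hmin : En n → ℝ) := by
  unfold hmin; fun_prop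

lemma norm_le_one_add_hmin {n : ℕ} (z : En n) : ‖z‖ ≤ 1 + hmin z := by
  unfold hmin
  rcases le_total ‖z‖ 1 with h | h
  · linarith [hmin_nonneg z, show hmin z = min ‖z‖ (‖z‖ ^ 2) from rfl]
  · rw [min_eq_left (by nlinarith)]; linarith

lemma sq_eq_hmin {n : ℕ} {z : En n} (h : ‖z‖ ≤ 1) : ‖z‖ ^ 2 = hmin z := by
  unfold hmin
  rw [min_eq_right (by nlinarith [norm_nonneg z])]

lemma hmin_add_le {n : ℕ} (a d : En n) : hmin (a + d) ≤ 4 * hmin a + 4 * ‖d‖ ^ 2 := by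
  have h1 : ‖a + d‖ ≤ ‖a‖ + ‖d‖ := norm_add_le a d
  have h0 := norm_nonneg (a + d)
  have ha := norm_nonneg a
  have hd := norm_nonneg d
  rcases le_total ‖a‖ ‖d‖ with h | h
  · have : hmin (a + d) ≤ ‖a + d‖ ^ 2 := min_le_right _ _
    have h2 := hmin_nonneg a
    nlinarith
  · have h2 : hmin (a + d) ≤ 4 * hmin a := by
      unfold hmin
      rw [mul_min_of_nonneg _ _ (by norm_num)]
      refine min_le_min (by linarith) (by nlinarith)
    nlinarith

lemma inner_gradient_eq {n : ℕ} (f : En n → ℝ) (x z : En n) :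
    ⟪gradient f x, z⟫ = fderiv ℝ f x z := by
  simp [gradient]

lemma IsTestFnEvol.taylor {n : ℕ} {u : ℝ → En n → ℝ} (hu : IsTestFnEvol u) :
    ∃ C, ∀ t x z, |u t (x + z) - u t x - ⟪gradient (u t) x, z⟫| ≤ C * hmin z := by
  obtain ⟨-, -, -, hC2, ⟨M₁, hM₁⟩, ⟨M₂, hM₂⟩⟩ := hu
  refine ⟨max (2 * M₁) M₂, fun t x z => ?_⟩
  rw [inner_gradient_eq]
  have hd : Differentiable ℝ (u t) := (hC2 t).differentiable (by norm_num)
  have hd2 : Differentiable ℝ (fderiv ℝ (u t)) :=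
    ((hC2 t).fderiv_right (m := 1) (by norm_num)).differentiable (by norm_num)
  have hM₁0 : 0 ≤ M₁ := (norm_nonneg _).trans (hM₁ t x)
  have hM₂0 : 0 ≤ M₂ := (norm_nonneg (fderiv ℝ (fderiv ℝ (u t)) x)).trans (hM₂ t x)
  have h1 : |u t (x + z) - u t x - fderiv ℝ (u t) x z| ≤ (2 * M₁) * ‖z‖ := by
    have := convex_univ.norm_image_sub_le_of_norm_fderiv_le' (𝕜 := ℝ) (f := u t)
      (φ := fderiv ℝ (u t) x) (C := 2 * M₁) (x := x) (y := x + z) (fun y _ => hd y)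
      (fun y _ => by linarith [norm_sub_le (fderiv ℝ (u t) y) (fderiv ℝ (u t) x), hM₁ t x, hM₁ t y])
      trivial trivial
    simpa using this
  have h2 : |u t (x + z) - u t x - fderiv ℝ (u t) x z| ≤ M₂ * ‖z‖ ^ 2 := by
    have := (convex_closedBall x ‖z‖).norm_image_sub_le_of_norm_fderiv_le' (𝕜 := ℝ) (f := u t)
      (φ := fderiv ℝ (u t) x) (C := M₂ * ‖z‖) (x := x) (y := x + z) (fun y _ => hd y)
      (fun y hy => by
        have h3 := convex_univ.norm_image_sub_le_of_norm_fderiv_le (𝕜 := ℝ) (f := fderiv ℝ (u t))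
          (C := M₂) (x := x) (y := y) (fun y _ => hd2 y) (fun y _ => hM₂ t y) trivial trivial
        refine h3.trans ?_
        gcongr
        simpa [dist_eq_norm] using hy)
      (by simp) (by simp)
    rw [pow_two, ← mul_assoc]
    simpa using this
  have h0 := hmin_nonneg z
  unfold hmin at *
  rcases le_total ‖z‖ (‖z‖ ^ 2) with h | h
  · rw [min_eq_left h]
    exact h1.trans (by gcongr; exact le_max_left _ _)
  · rw [min_eq_right h]
    exact h2.trans (by gcongr; exact le_max_right _ _)

lemma integrable_norm_of_hmin {n : ℕ} {μ : Measure (En n)} {G : En n → En n} (hG : Measurable G)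
    (hGi : Integrable (fun y => hmin (G y)) μ) {B : Set (En n)} (hB : μ B ≠ ∞) :
    IntegrableOn (fun y => ‖G y‖) B μ := by
  have h1 : IntegrableOn (fun y => 1 + hmin (G y)) B μ :=
    (integrableOn_const hB).add hGi.integrableOn
  refine Integrable.mono' h1 hG.norm.aestronglyMeasurable (Filter.Eventually.of_forall fun y => ?_)
  simpa using norm_le_one_add_hmin (G y)

/-- Every test function `u` touching `v` from above at `(t₀, x₀)` (over `[0,T] × ℝⁿ`) satisfies
`-u_t - bx·∇u - ∫ (u(t₀, x₀ + G y) - u(t₀, x₀) - ∇u·G y) μ(dy) ≤ κ` at that point. This is the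
common form of the sub- and (after a change of sign) supersolution property at a fixed point, with
`G = F(x₀, ·)` and `bx = b(x₀)`. -/
def TouchBound {n : ℕ} (T : ℝ) (μ : Measure (En n)) (G : En n → En n) (v : ℝ → En n → ℝ)
    (t₀ : ℝ) (x₀ bx : En n) (κ : ℝ) : Prop :=
  ∀ u, IsTestFnEvol u →
    (∀ t ∈ Set.Icc (0 : ℝ) T, ∀ x, v t x - u t x ≤ v t₀ x₀ - u t₀ x₀) → u t₀ x₀ = v t₀ x₀ →
    -(deriv (fun s => u s x₀) t₀) - (⟪bx, gradient (u t₀) x₀⟫ +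
      ∫ y, (u t₀ (x₀ + G y) - u t₀ x₀ - ⟪gradient (u t₀) x₀, G y⟫) ∂μ) ≤ κ

/-- The viscosity inequality extends to the discontinuous test function equal to `Q` for small jumps
(those in `A`) and to `v` itself for the remaining ones; the small jumps are estimated by the
quadratic bound on `Q`. This follows by letting `ε → 0` in `exists_testFn`. -/
lemma key_ineq {n : ℕ} {T : ℝ} {μ : Measure (En n)} {G : En n → En n} (hG : Measurable G)
    (hGi : Integrable (fun y => hmin (G y)) μ) (v : ℝ → En n → ℝ)
    (hv : ContinuousOn (fun p : ℝ × En n => v p.1 p.2) (Set.Icc 0 T ×ˢ Set.univ)) {M : ℝ}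
    (hM : ∀ t ∈ Set.Icc (0 : ℝ) T, ∀ x, |v t x| ≤ M)
    {t₀ : ℝ} (ht₀ : t₀ ∈ Set.Icc (0 : ℝ) T) {x₀ : En n}
    (Q : ℝ × En n → ℝ) (hQ : ContDiff ℝ 2 Q)
    (hvQ : ∀ t ∈ Set.Icc (0 : ℝ) T, ∀ x, v t x ≤ Q (t, x)) (hQ0 : Q (t₀, x₀) = v t₀ x₀)
    {a : ℝ} (ha : HasDerivAt (fun t => Q (t, x₀)) a t₀)
    {p : En n} (hp : HasGradientAt (fun x => Q (t₀, x)) p x₀) {C : ℝ} (hC : 0 < C)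
    (hQC : ∀ z, Q (t₀, x₀ + z) ≤ v t₀ x₀ + ⟪p, z⟫ + C * ‖z‖ ^ 2)
    (bx : En n) (κ : ℝ)
    (H : TouchBound T μ G v t₀ x₀ bx κ)
    {A : Set (En n)} (hA : MeasurableSet A) (hAf : μ Aᶜ ≠ ∞)
    (hA2 : IntegrableOn (fun y => ‖G y‖ ^ 2) A μ) :
    -a - ⟪bx, p⟫ - (2 * C * ∫ y in A, ‖G y‖ ^ 2 ∂μ +
      ∫ y in Aᶜ, (v t₀ (x₀ + G y) - v t₀ x₀ - ⟪p, G y⟫) ∂μ) ≤ κ := by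
  obtain ⟨M', hM'⟩ := (isCompact_closedBall (t₀, x₀) (1 : ℝ)).exists_bound_of_continuousOn
    hQ.continuous.continuousOn
  have happ : ∀ k : ℕ, _ := fun k => exists_testFn (M := max M M') v hv
    (fun t ht x => (hM t ht x).trans (le_max_left _ _)) ht₀ Q hQ hvQ
    (fun q hq => (hM' q hq).trans (le_max_right _ _)) hC hQC (ε := 1 / ((k : ℝ) + 1)) (by positivity)
  choose u hut huv huQ huC huM huε using happ
  have hu0 : ∀ k, u k t₀ x₀ = v t₀ x₀ := fun k => by
    rw [← hQ0]; exact (huQ k).self_of_nhds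
  have hcx : Continuous (fun x : En n => (t₀, x)) := by fun_prop
  have hct : Continuous (fun t : ℝ => (t, x₀)) := by fun_prop
  have hgrad : ∀ k, gradient (u k t₀) x₀ = p := fun k => by
    have : u k t₀ =ᶠ[nhds x₀] fun x => Q (t₀, x) := hcx.continuousAt.eventually (huQ k)
    exact (hp.congr_of_eventuallyEq this).gradient
  have hder : ∀ k, deriv (fun s => u k s x₀) t₀ = a := fun k => by
    have : (fun s => u k s x₀) =ᶠ[nhds t₀] fun t => Q (t, x₀) :=
      hct.continuousAt.eventually (huQ k)
    exact (ha.congr_of_eventuallyEq this).deriv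
  have hnorm : IntegrableOn (fun y => ‖G y‖) Aᶜ μ := integrable_norm_of_hmin hG hGi hAf
  have humeas : ∀ k, Measurable (u k t₀) := fun k =>
    ((hut k).1.comp hcx).measurable
  have hintg : ∀ k, Integrable (fun y => u k t₀ (x₀ + G y) - v t₀ x₀ - ⟪p, G y⟫) μ := by
    intro k
    obtain ⟨C', hC'⟩ := (hut k).taylor
    refine Integrable.mono' (hGi.const_mul C') ?_ (Filter.Eventually.of_forall fun y => ?_)
    · have := (humeas k).comp (hG.const_add x₀)
      have h2 : Measurable fun y => ⟪p, G y⟫ := hG.const_inner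
      exact ((this.sub_const _).sub h2).aestronglyMeasurable
    · have := hC' t₀ x₀ (G y)
      rwa [hgrad, hu0] at this
  have hk : ∀ k, -a - ⟪bx, p⟫ - (2 * C * ∫ y in A, ‖G y‖ ^ 2 ∂μ +
      ∫ y in Aᶜ, (u k t₀ (x₀ + G y) - v t₀ x₀ - ⟪p, G y⟫) ∂μ) ≤ κ := by
    intro k
    have h1 := H (u k) (hut k) (fun t ht x => by rw [hu0]; linarith [huv k t ht x]) (hu0 k)
    rw [hder, hgrad, hu0, ← integral_add_compl hA (hintg k)] at h1
    have h2 : ∫ y in A, (u k t₀ (x₀ + G y) - v t₀ x₀ - ⟪p, G y⟫) ∂μ ≤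
        2 * C * ∫ y in A, ‖G y‖ ^ 2 ∂μ := by
      rw [← integral_const_mul]
      refine integral_mono (hintg k).integrableOn (hA2.const_mul _) fun y => ?_
      change u k t₀ (x₀ + G y) - v t₀ x₀ - ⟪p, G y⟫ ≤ 2 * C * ‖G y‖ ^ 2
      linarith [huC k (G y)]
    linarith
  have hlim : Filter.Tendsto
      (fun k => ∫ y in Aᶜ, (u k t₀ (x₀ + G y) - v t₀ x₀ - ⟪p, G y⟫) ∂μ) Filter.atTop
      (nhds (∫ y in Aᶜ, (v t₀ (x₀ + G y) - v t₀ x₀ - ⟪p, G y⟫) ∂μ)) := by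
    refine tendsto_integral_of_dominated_convergence
      (fun y => (max M M' + 1 + |v t₀ x₀|) + ‖p‖ * ‖G y‖)
      (fun k => (hintg k).integrableOn.aestronglyMeasurable)
      ((integrableOn_const hAf).add (hnorm.const_mul _))
      (fun k => Filter.Eventually.of_forall fun y => ?_) (Filter.Eventually.of_forall fun y => ?_)
    · have h1 := huM k (x₀ + G y)
      have h2 := abs_real_inner_le_norm p (G y)
      rw [Real.norm_eq_abs]
      have h3 := abs_sub (u k t₀ (x₀ + G y) - v t₀ x₀) ⟪p, G y⟫
      have h4 := abs_sub (u k t₀ (x₀ + G y)) (v t₀ x₀)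
      linarith
    · refine (Filter.Tendsto.sub_const ?_ _).sub_const _
      by_cases hz : G y = 0
      · simp [hz, hu0]
      · have hz0 : 0 < ‖G y‖ := norm_pos_iff.2 hz
        rw [tendsto_iff_dist_tendsto_zero]
        have h0 : Filter.Tendsto (fun k : ℕ => 1 / ((k : ℝ) + 1)) Filter.atTop (nhds 0) :=
          tendsto_one_div_add_atTop_nhds_zero_nat
        refine squeeze_zero' (Filter.Eventually.of_forall fun _ => dist_nonneg) ?_ h0
        have h5 : ∀ᶠ k : ℕ in Filter.atTop, ‖G y‖ ≤ k :=
          (tendsto_natCast_atTop_atTop (R := ℝ)).eventually_ge_atTop _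
        filter_upwards [h0.eventually_le_const hz0, h5] with k hk1 hk2
        rw [Real.dist_eq]
        refine huε k (G y) hk1 ?_
        rw [one_div_one_div]; linarith
  refine le_of_tendsto ((hlim.const_add _).const_sub _) (Filter.Eventually.of_forall hk)

/-! ### Penalisation at infinity -/

/-- The penalisation at infinity `log(1 + |x|²)`: coercive, with bounded gradient and Hessian. -/
def psi {n : ℕ} (x : En n) : ℝ := Real.log (1 + ‖x‖ ^ 2)

/-- The gradient of `psi`. -/
def dpsi {n : ℕ} (x : En n) : En n := (2 / (1 + ‖x‖ ^ 2)) • x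

lemma contDiff_psi {n : ℕ} : ContDiff ℝ 2 (psi : En n → ℝ) := by
  unfold psi
  refine ContDiff.log ?_ (fun x => by positivity)
  exact contDiff_const.add (contDiff_norm_sq ℝ)

lemma psi_nonneg {n : ℕ} (x : En n) : 0 ≤ psi x :=
  Real.log_nonneg (by nlinarith [norm_nonneg x])

lemma hasGradientAt_psi {n : ℕ} (x : En n) : HasGradientAt psi (dpsi x) x := by
  rw [hasGradientAt_iff_hasFDerivAt]
  have h1 : HasFDerivAt (fun y : En n => 1 + ‖y‖ ^ 2) (2 • innerSL ℝ x) x :=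
    (hasStrictFDerivAt_norm_sq x).hasFDerivAt.const_add 1
  have h2 := h1.log (by positivity)
  refine h2.congr_fderiv ?_
  ext z
  simp [dpsi]
  ring

lemma psi_incr {n : ℕ} (x z : En n) :
    psi (x + z) - psi x - ⟪dpsi x, z⟫ ≤ ‖z‖ ^ 2 / (1 + ‖x‖ ^ 2) := by
  have hx : 0 < 1 + ‖x‖ ^ 2 := by positivity
  have hxz : 0 < 1 + ‖x + z‖ ^ 2 := by positivity
  unfold psi dpsi
  rw [← Real.log_div hxz.ne' hx.ne', real_inner_smul_left]
  have h1 := Real.log_le_sub_one_of_pos (div_pos hxz hx)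
  have h2 : (1 + ‖x + z‖ ^ 2) / (1 + ‖x‖ ^ 2) - 1 - 2 / (1 + ‖x‖ ^ 2) * ⟪x, z⟫
      = ‖z‖ ^ 2 / (1 + ‖x‖ ^ 2) := by
    rw [norm_add_sq_real]
    field_simp
    ring
  linarith

lemma norm_dpsi_le {n : ℕ} (x : En n) : ‖dpsi x‖ ≤ 1 := by
  unfold dpsi
  rw [norm_smul, Real.norm_of_nonneg (by positivity), div_mul_eq_mul_div, div_le_one (by positivity)]
  nlinarith [sq_nonneg (‖x‖ - 1)]

lemma psi_lip {n : ℕ} (x z : En n) : psi (x + z) - psi x ≤ ‖z‖ := by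
  have := convex_univ.norm_image_sub_le_of_norm_hasFDerivWithin_le (𝕜 := ℝ) (f := psi)
    (C := 1) (x := x) (y := x + z)
    (fun y _ => (hasGradientAt_psi y).hasFDerivAt.hasFDerivWithinAt)
    (fun y _ => by simpa using norm_dpsi_le y) trivial trivial
  have h2 := le_abs_self (psi (x + z) - psi x)
  simp only [add_sub_cancel_left, one_mul, Real.norm_eq_abs] at this
  linarith

/-- The nonlocal increment of `psi` along a jump `a + d`, with `d` weighted by `1/(1 + |x|²)`. With
`a = F(0,y)` and `d = F(x,y) - F(0,y)` the integral of the bound does not depend on `x`. -/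
lemma psi_bound {n : ℕ} (x a d : En n) :
    psi (x + (a + d)) - psi x - ⟪dpsi x, a + d⟫ ≤ 4 * ‖d‖ ^ 2 / (1 + ‖x‖ ^ 2) + 4 * hmin a := by
  have h1 : ‖a + d‖ ≤ ‖a‖ + ‖d‖ := norm_add_le a d
  have h0 := norm_nonneg (a + d)
  have ha := norm_nonneg a
  have hd := norm_nonneg d
  have hx : 0 < 1 + ‖x‖ ^ 2 := by positivity
  have h3 := psi_incr x (a + d)
  rcases le_total ‖a‖ ‖d‖ with h | h
  · have h2 := hmin_nonneg a
    have h4 : ‖a + d‖ ^ 2 / (1 + ‖x‖ ^ 2) ≤ 4 * ‖d‖ ^ 2 / (1 + ‖x‖ ^ 2) := by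
      gcongr; nlinarith
    linarith
  · have h5 : 0 ≤ 4 * ‖d‖ ^ 2 / (1 + ‖x‖ ^ 2) := by positivity
    suffices psi (x + (a + d)) - psi x - ⟪dpsi x, a + d⟫ ≤ 4 * hmin a by linarith
    unfold hmin
    rw [mul_min_of_nonneg _ _ (by norm_num)]
    refine le_min ?_ ?_
    · have h6 := (abs_le.1 (abs_real_inner_le_norm (dpsi x) (a + d))).1
      have h7 := psi_lip x (a + d)
      have h8 := norm_dpsi_le x
      nlinarith
    · have : ‖a + d‖ ^ 2 / (1 + ‖x‖ ^ 2) ≤ ‖a + d‖ ^ 2 :=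
        div_le_self (by positivity) (by nlinarith [norm_nonneg x])
      nlinarith

/-- `key_ineq` for the touching function obtained at a maximum point of the penalised functional, in
terms of `e^{lam t} v`. -/
lemma jet_ineq {n : ℕ} {T : ℝ} {μ : Measure (En n)} {G : En n → En n} (hG : Measurable G)
    (hGi : Integrable (fun y => hmin (G y)) μ) (v : ℝ → En n → ℝ)
    (hv : ContinuousOn (fun p : ℝ × En n => v p.1 p.2) (Set.Icc 0 T ×ˢ Set.univ)) {M : ℝ}
    (hM : ∀ t ∈ Set.Icc (0 : ℝ) T, ∀ x, |v t x| ≤ M)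
    {t₀ : ℝ} (ht₀ : t₀ ∈ Set.Icc (0 : ℝ) T) {x₀ : En n}
    {lam ε η s₀ : ℝ} (hε : 0 < ε) (hη : 0 ≤ η) {y₀ : En n}
    (hmax : ∀ t ∈ Set.Icc (0 : ℝ) T, ∀ x,
      Real.exp (lam * t) * v t x - (‖x - y₀‖ ^ 2 + (t - s₀) ^ 2) / (2 * ε) - η * psi x ≤
      Real.exp (lam * t₀) * v t₀ x₀ - (‖x₀ - y₀‖ ^ 2 + (t₀ - s₀) ^ 2) / (2 * ε) - η * psi x₀)
    (bx : En n) (κ : ℝ)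
    (H : TouchBound T μ G v t₀ x₀ bx κ)
    {A : Set (En n)} (hA : MeasurableSet A) (hAf : μ Aᶜ ≠ ∞)
    (hA2 : IntegrableOn (fun y => ‖G y‖ ^ 2) A μ) {P : En n}
    (hP : P = ε⁻¹ • (x₀ - y₀) + η • dpsi x₀) :
    lam * (Real.exp (lam * t₀) * v t₀ x₀) - (t₀ - s₀) / ε - ⟪bx, P⟫ -
      ((1 / ε + 2 * η) * ∫ y in A, ‖G y‖ ^ 2 ∂μ +
      ∫ y in Aᶜ, (Real.exp (lam * t₀) * v t₀ (x₀ + G y) - Real.exp (lam * t₀) * v t₀ x₀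
        - ⟪P, G y⟫) ∂μ) ≤ Real.exp (lam * t₀) * κ := by
  set κ₀ := Real.exp (lam * t₀) * v t₀ x₀ - (‖x₀ - y₀‖ ^ 2 + (t₀ - s₀) ^ 2) / (2 * ε) - η * psi x₀
    with hκ₀
  set Q : ℝ × En n → ℝ := fun q => Real.exp (-(lam * q.1)) *
    (κ₀ + (‖q.2 - y₀‖ ^ 2 + (q.1 - s₀) ^ 2) / (2 * ε) + η * psi q.2) with hQdef
  have hEE : ∀ t, Real.exp (-(lam * t)) * Real.exp (lam * t) = 1 := fun t => by
    rw [← Real.exp_add]; simp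
  set E := Real.exp (lam * t₀) with hE
  set e := Real.exp (-(lam * t₀)) with he
  have hee : e * E = 1 := hEE t₀
  have he0 : 0 < e := Real.exp_pos _
  have hE0 : 0 < E := Real.exp_pos _
  have hQ : ContDiff ℝ 2 Q := by
    have h1 : ContDiff ℝ 2 (fun q : ℝ × En n => psi q.2) := contDiff_psi.comp contDiff_snd
    have h2 : ContDiff ℝ 2 (fun q : ℝ × En n => ‖q.2 - y₀‖ ^ 2) :=
      (contDiff_snd.sub contDiff_const).norm_sq ℝ
    fun_prop
  have hQ0 : Q (t₀, x₀) = v t₀ x₀ := by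
    simp only [hQdef, hκ₀]
    rw [← he]
    linear_combination v t₀ x₀ * hee
  have hvQ : ∀ t ∈ Set.Icc (0 : ℝ) T, ∀ x, v t x ≤ Q (t, x) := by
    intro t ht x
    have h1 := hmax t ht x
    have h2 : Real.exp (lam * t) * v t x ≤
      κ₀ + (‖x - y₀‖ ^ 2 + (t - s₀) ^ 2) / (2 * ε) + η * psi x := by linarith
    have h3 := mul_le_mul_of_nonneg_left h2 (Real.exp_pos (-(lam * t))).le
    rw [← mul_assoc, hEE, one_mul] at h3
    exact h3
  have hB : κ₀ + (‖x₀ - y₀‖ ^ 2 + (t₀ - s₀) ^ 2) / (2 * ε) + η * psi x₀ = E * v t₀ x₀ := by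
    rw [hκ₀]; ring
  have ha : HasDerivAt (fun t => Q (t, x₀)) (-lam * v t₀ x₀ + e * ((t₀ - s₀) / ε)) t₀ := by
    have h1 : HasDerivAt (fun t => Real.exp (-(lam * t))) (e * (-(lam * 1))) t₀ :=
      (((hasDerivAt_id t₀).const_mul lam).neg).exp
    have h2 : HasDerivAt (fun t => κ₀ + (‖x₀ - y₀‖ ^ 2 + (t - s₀) ^ 2) / (2 * ε) + η * psi x₀)
        ((t₀ - s₀) / ε) t₀ := by
      have := ((((((hasDerivAt_id t₀).sub_const s₀).pow 2).const_add (‖x₀ - y₀‖ ^ 2)).div_const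
        (2 * ε)).const_add κ₀).add_const (η * psi x₀)
      convert! this using 1
      simp
      field_simp
    convert! h1.mul h2 using 1
    rw [hB]
    linear_combination (-lam * v t₀ x₀ ) * hee.symm
  have hp : HasGradientAt (fun x => Q (t₀, x)) (e • P) x₀ := by
    rw [hasGradientAt_iff_hasFDerivAt]
    have h1 : HasFDerivAt (fun x : En n => ‖x - y₀‖ ^ 2) (2 • innerSL ℝ (x₀ - y₀)) x₀ := by
      have := (hasStrictFDerivAt_norm_sq (x₀ - y₀)).hasFDerivAt.comp x₀
        ((hasFDerivAt_id x₀).sub_const y₀)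
      exact this
    have h2 := (hasGradientAt_psi x₀).hasFDerivAt
    have h3 := ((((h1.add_const ((t₀ - s₀) ^ 2)).mul_const (2 * ε)⁻¹).const_add κ₀).add
      (h2.const_mul η)).const_mul e
    refine (h3.congr_fderiv ?_).congr_of_eventuallyEq (Filter.Eventually.of_forall fun x => ?_)
    · ext z
      rw [hP]
      simp
      left
      field_simp
    · simp only [hQdef]
      rw [← he]
      simp [div_eq_mul_inv]
  have hQC : ∀ z, Q (t₀, x₀ + z) ≤ v t₀ x₀ + ⟪e • P, z⟫ + (e * (1 / (2 * ε) + η)) * ‖z‖ ^ 2 := by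
    intro z
    simp only [hQdef]
    rw [← he]
    have h1 := psi_incr x₀ z
    have h2 : ‖z‖ ^ 2 / (1 + ‖x₀‖ ^ 2) ≤ ‖z‖ ^ 2 :=
      div_le_self (by positivity) (by nlinarith [norm_nonneg x₀])
    have h3 : η * (psi (x₀ + z) - psi x₀ - ⟪dpsi x₀, z⟫) ≤ η * ‖z‖ ^ 2 :=
      mul_le_mul_of_nonneg_left (h1.trans h2) hη
    have h4 : ‖x₀ + z - y₀‖ ^ 2 = ‖x₀ - y₀‖ ^ 2 + 2 * ⟪x₀ - y₀, z⟫ + ‖z‖ ^ 2 := by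
      rw [← norm_add_sq_real]; congr 2; abel
    have h5 : ⟪e • P, z⟫ = e * (ε⁻¹ * ⟪x₀ - y₀, z⟫ + η * ⟪dpsi x₀, z⟫) := by
      rw [hP, real_inner_smul_left, inner_add_left, real_inner_smul_left, real_inner_smul_left]
    have h6 : v t₀ x₀ = e * (E * v t₀ x₀) := by rw [← mul_assoc, hee, one_mul]
    rw [h5, h6, ← hB, h4, mul_assoc e, ← mul_add, ← mul_add]
    refine mul_le_mul_of_nonneg_left ?_ he0.le
    have h7 : (‖x₀ - y₀‖ ^ 2 + 2 * ⟪x₀ - y₀, z⟫ + ‖z‖ ^ 2 + (t₀ - s₀) ^ 2) / (2 * ε) =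
      (‖x₀ - y₀‖ ^ 2 + (t₀ - s₀) ^ 2) / (2 * ε) + ε⁻¹ * ⟪x₀ - y₀, z⟫ + 1 / (2 * ε) * ‖z‖ ^ 2 := by
      field_simp
      ring
    rw [h7]
    linarith
  have hkey := key_ineq hG hGi v hv hM ht₀ Q hQ hvQ hQ0 ha hp (by positivity) hQC bx κ H hA hAf hA2
  have hI : ∫ y in Aᶜ, (E * v t₀ (x₀ + G y) - E * v t₀ x₀ - ⟪P, G y⟫) ∂μ =
      E * ∫ y in Aᶜ, (v t₀ (x₀ + G y) - v t₀ x₀ - ⟪e • P, G y⟫) ∂μ := by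
    rw [← integral_const_mul]
    refine integral_congr_ae (Filter.Eventually.of_forall fun y => ?_)
    simp only [real_inner_smul_left]
    linear_combination ⟪P, G y⟫ * hee
  rw [hI]
  have := mul_le_mul_of_nonneg_left hkey hE0.le
  refine le_trans (le_of_eq ?_) this
  rw [real_inner_smul_right]
  have h8 : 1 / ε + 2 * η = 2 * (1 / (2 * ε) + η) := by field_simp
  rw [h8]
  linear_combination (-(t₀ - s₀) / ε - ⟪bx, P⟫ -
    2 * (1 / (2 * ε) + η) * (∫ y in A, ‖G y‖ ^ 2 ∂μ)) * hee.symm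

/-! ### The inequality at a doubled maximum -/

lemma tendsto_small_jumps {n : ℕ} {μ : Measure (En n)} {G : En n → En n} (hG : Measurable G)
    (hGi : Integrable (fun y => hmin (G y)) μ) :
    Filter.Tendsto (fun k : ℕ => ∫ y in {y | ‖G y‖ < 1 / ((k : ℝ) + 1)}, hmin (G y) ∂μ)
      Filter.atTop (nhds 0) := by
  have hm : ∀ k : ℕ, MeasurableSet {y | ‖G y‖ < 1 / ((k : ℝ) + 1)} := fun k =>
    measurableSet_lt hG.norm measurable_const
  have hanti : Antitone fun k : ℕ => {y | ‖G y‖ < 1 / ((k : ℝ) + 1)} := by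
    intro i j hij y hy
    refine lt_of_lt_of_le (show ‖G y‖ < 1 / ((j : ℝ) + 1) from hy) ?_
    have : (i : ℝ) ≤ j := by exact_mod_cast hij
    exact one_div_le_one_div_of_le (by positivity) (by linarith)
  have h := tendsto_setIntegral_of_antitone (μ := μ) (f := fun y => hmin (G y)) hm hanti ⟨0, hGi.integrableOn⟩
  convert! h using 2
  symm
  refine setIntegral_eq_zero_of_forall_eq_zero fun y hy => ?_
  have h0 : ‖G y‖ ≤ 0 := by
    refine ge_of_tendsto (tendsto_one_div_add_atTop_nhds_zero_nat (𝕜 := ℝ))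
      (Filter.Eventually.of_forall fun k => ?_)
    have := Set.mem_iInter.1 hy k
    exact le_of_lt this
  have h1 : ‖G y‖ = 0 := le_antisymm h0 (norm_nonneg _)
  simp [hmin, h1]

lemma integrable_diff_sq {n : ℕ} {μ : Measure (En n)} {D : En n → En n} (hD : Measurable D)
    {k : ℝ} (hk : 0 ≤ k) (h : ∫⁻ y, ENNReal.ofReal (‖D y‖ ^ 2) ∂μ ≤ ENNReal.ofReal k) :
    Integrable (fun y => ‖D y‖ ^ 2) μ ∧ ∫ y, ‖D y‖ ^ 2 ∂μ ≤ k := by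
  have hm : AEStronglyMeasurable (fun y => ‖D y‖ ^ 2) μ := (hD.norm.pow_const 2).aestronglyMeasurable
  have h0 : 0 ≤ᵐ[μ] fun y => ‖D y‖ ^ 2 := Filter.Eventually.of_forall fun y => by positivity
  refine ⟨⟨hm, ?_⟩, ?_⟩
  · rw [hasFiniteIntegral_iff_ofReal h0]
    exact h.trans_lt ENNReal.ofReal_lt_top
  · rw [integral_eq_lintegral_of_nonneg_ae h0 hm]
    exact ENNReal.toReal_le_of_le_ofReal hk h

lemma integrableOn_incr {n : ℕ} {T : ℝ} {μ : Measure (En n)} {G : En n → En n} (hG : Measurable G)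
    (hGi : Integrable (fun y => hmin (G y)) μ) (v : ℝ → En n → ℝ)
    (hv : ContinuousOn (fun p : ℝ × En n => v p.1 p.2) (Set.Icc 0 T ×ˢ Set.univ)) {M : ℝ}
    (hM : ∀ t ∈ Set.Icc (0 : ℝ) T, ∀ x, |v t x| ≤ M)
    {t₀ : ℝ} (ht₀ : t₀ ∈ Set.Icc (0 : ℝ) T) (x₀ P : En n) (E m : ℝ)
    {B : Set (En n)} (hB : μ B ≠ ∞) :
    IntegrableOn (fun y => E * v t₀ (x₀ + G y) - m - ⟪P, G y⟫) B μ := by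
  have hc : Continuous (v t₀) :=
    hv.comp_continuous (f := fun x => (t₀, x)) (by fun_prop) (fun x => ⟨ht₀, trivial⟩)
  have hmeas : Measurable fun y => v t₀ (x₀ + G y) := hc.measurable.comp (hG.const_add x₀)
  have h1 : IntegrableOn (fun y => v t₀ (x₀ + G y)) B μ :=
    Integrable.mono' (integrableOn_const hB : IntegrableOn (fun _ => M) B μ)
      hmeas.aestronglyMeasurable (Filter.Eventually.of_forall fun y => hM _ ht₀ _)
  have h2 : IntegrableOn (fun y => ⟪P, G y⟫) B μ := by
    refine Integrable.mono' ((integrable_norm_of_hmin hG hGi hB).const_mul ‖P‖)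
      (hG.const_inner).aestronglyMeasurable (Filter.Eventually.of_forall fun y => ?_)
    exact abs_real_inner_le_norm _ _
  exact ((h1.const_mul E).sub (integrableOn_const hB)).sub h2

/-- The two viscosity inequalities at a maximum point of the doubled functional, added up. The
maximality bounds the sum of the large-jump terms; the small-jump terms are removed by letting the
truncation level tend to zero. -/
lemma doubling_ineq {n : ℕ} {T : ℝ} {μ : Measure (En n)} {F : En n → En n → En n}
    (hF : ∀ x, Measurable (F x)) (hFi : ∀ x, Integrable (fun y => hmin (F x y)) μ)
    {K : ℝ} (hK0 : 0 ≤ K)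
    (hK : ∀ x₁ x₂ : En n, ∫⁻ y, ENNReal.ofReal (‖F x₁ y - F x₂ y‖ ^ 2) ∂μ
      ≤ ENNReal.ofReal (K * ‖x₁ - x₂‖ ^ 2))
    {b : En n → En n} {Mb : ℝ} (hMb : ∀ x, ‖b x‖ ≤ Mb) {β : NNReal} (hβ : LipschitzWith β b)
    (v₁ v₂ : ℝ → En n → ℝ)
    (hv₁ : ContinuousOn (fun p : ℝ × En n => v₁ p.1 p.2) (Set.Icc 0 T ×ˢ Set.univ))
    (hv₂ : ContinuousOn (fun p : ℝ × En n => v₂ p.1 p.2) (Set.Icc 0 T ×ˢ Set.univ)) {M : ℝ}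
    (hM₁ : ∀ t ∈ Set.Icc (0 : ℝ) T, ∀ x, |v₁ t x| ≤ M)
    (hM₂ : ∀ t ∈ Set.Icc (0 : ℝ) T, ∀ x, |v₂ t x| ≤ M)
    {t s : ℝ} (ht : t ∈ Set.Icc (0 : ℝ) T) (hs : s ∈ Set.Icc (0 : ℝ) T) {x y : En n}
    {lam ε η : ℝ} (hε : 0 < ε) (hη : 0 ≤ η)
    (hmax : ∀ t' ∈ Set.Icc (0 : ℝ) T, ∀ s' ∈ Set.Icc (0 : ℝ) T, ∀ x' y' : En n,
      Real.exp (lam * t') * v₁ t' x' - Real.exp (lam * s') * v₂ s' y'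
        - (‖x' - y'‖ ^ 2 + (t' - s') ^ 2) / (2 * ε) - η * psi x' ≤
      Real.exp (lam * t) * v₁ t x - Real.exp (lam * s) * v₂ s y
        - (‖x - y‖ ^ 2 + (t - s) ^ 2) / (2 * ε) - η * psi x)
    {κ₁ κ₂ : ℝ} (H₁ : TouchBound T μ (F x) v₁ t x (b x) κ₁)
    (H₂ : TouchBound T μ (F y) (fun t x => -v₂ t x) s y (b y) κ₂) :
    lam * (Real.exp (lam * t) * v₁ t x - Real.exp (lam * s) * v₂ s y) ≤
      (β + K / 2) * (‖x - y‖ ^ 2 / ε) + η * (Mb + 4 * K + 4 * ∫ z, hmin (F 0 z) ∂μ)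
      + Real.exp (lam * t) * κ₁ + Real.exp (lam * s) * κ₂ := by
  set E₁ := Real.exp (lam * t)
  set E₂ := Real.exp (lam * s)
  set P₁ : En n := ε⁻¹ • (x - y) + η • dpsi x with hP₁
  set P₂ : En n := ε⁻¹ • (y - x) + (0 : ℝ) • dpsi y with hP₂
  obtain ⟨hD1, hD1'⟩ := integrable_diff_sq ((hF x).sub (hF y)) (by positivity) (hK x y)
  obtain ⟨hD2, hD2'⟩ := integrable_diff_sq ((hF x).sub (hF 0)) (by positivity) (hK x 0)
  simp only [Pi.sub_apply, sub_zero] at hD1 hD1' hD2 hD2'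
  have hx1 : 0 < 1 + ‖x‖ ^ 2 := by positivity
  have hdrift : ⟪b x, P₁⟫ + ⟪b y, P₂⟫ ≤ β * (‖x - y‖ ^ 2 / ε) + η * Mb := by
    have h1 : ⟪b x, P₁⟫ + ⟪b y, P₂⟫ = ε⁻¹ * ⟪b x - b y, x - y⟫ + η * ⟪b x, dpsi x⟫ := by
      rw [hP₁, hP₂, zero_smul, add_zero, ← neg_sub x y, smul_neg, inner_neg_right, inner_add_right]
      simp only [real_inner_smul_right, inner_sub_left]
      ring
    have h2 : ⟪b x - b y, x - y⟫ ≤ β * ‖x - y‖ ^ 2 := by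
      have h3 := hβ.dist_le_mul x y
      rw [dist_eq_norm, dist_eq_norm] at h3
      calc _ ≤ ‖b x - b y‖ * ‖x - y‖ := real_inner_le_norm _ _
        _ ≤ (β * ‖x - y‖) * ‖x - y‖ := by gcongr
        _ = _ := by ring
    have h4 : ⟪b x, dpsi x⟫ ≤ Mb := by
      have := real_inner_le_norm (b x) (dpsi x)
      nlinarith [norm_dpsi_le x, hMb x, norm_nonneg (b x), norm_nonneg (dpsi x)]
    rw [h1]
    have h5 : ε⁻¹ * ⟪b x - b y, x - y⟫ ≤ ε⁻¹ * (β * ‖x - y‖ ^ 2) := by gcongr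
    have h6 : η * ⟪b x, dpsi x⟫ ≤ η * Mb := by gcongr
    have h7 : ε⁻¹ * (β * ‖x - y‖ ^ 2) = β * (‖x - y‖ ^ 2 / ε) := by field_simp
    linarith
  -- maximality, compared with both points jumping along the same mark `z`
  set Rf : En n → ℝ := fun z => (1 / (2 * ε)) * ‖F x z - F y z‖ ^ 2 +
    η * ((4 / (1 + ‖x‖ ^ 2)) * ‖F x z - F 0 z‖ ^ 2 + 4 * hmin (F 0 z)) with hRf
  have hpt : ∀ z, (E₁ * v₁ t (x + F x z) - E₁ * v₁ t x - ⟪P₁, F x z⟫) +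
      (E₂ * -v₂ s (y + F y z) - E₂ * -v₂ s y - ⟪P₂, F y z⟫) ≤ Rf z := by
    intro z
    have h1 := hmax t ht s hs (x + F x z) (y + F y z)
    have h2 := psi_bound x (F 0 z) (F x z - F 0 z)
    rw [add_sub_cancel] at h2
    have h3 : ‖x + F x z - (y + F y z)‖ ^ 2 =
        ‖x - y‖ ^ 2 + 2 * ⟪x - y, F x z - F y z⟫ + ‖F x z - F y z‖ ^ 2 := by
      rw [← norm_add_sq_real]; congr 2; abel
    have h4 : ⟪P₁, F x z⟫ + ⟪P₂, F y z⟫ =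
        ε⁻¹ * ⟪x - y, F x z - F y z⟫ + η * ⟪dpsi x, F x z⟫ := by
      rw [hP₁, hP₂, zero_smul, add_zero, ← neg_sub x y, smul_neg, inner_neg_left, inner_add_left]
      simp only [real_inner_smul_left, inner_sub_right]
      ring
    have h5 : (‖x + F x z - (y + F y z)‖ ^ 2 + (t - s) ^ 2) / (2 * ε) =
        (‖x - y‖ ^ 2 + (t - s) ^ 2) / (2 * ε) + ε⁻¹ * ⟪x - y, F x z - F y z⟫ +
        (1 / (2 * ε)) * ‖F x z - F y z‖ ^ 2 := by
      rw [h3]; field_simp; ring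
    have h6 : η * (psi (x + F x z) - psi x - ⟪dpsi x, F x z⟫) ≤
        η * ((4 / (1 + ‖x‖ ^ 2)) * ‖F x z - F 0 z‖ ^ 2 + 4 * hmin (F 0 z)) := by
      refine mul_le_mul_of_nonneg_left (h2.trans (le_of_eq ?_)) hη
      ring
    rw [h5] at h1
    simp only [hRf]
    linarith
  have hRi : Integrable Rf μ :=
    (hD1.const_mul _).add (((hD2.const_mul _).add ((hFi 0).const_mul 4)).const_mul η)
  have hR0 : ∀ z, 0 ≤ Rf z := fun z => by
    have := hmin_nonneg (F 0 z)
    simp only [hRf]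
    positivity
  have hRint : ∫ z, Rf z ∂μ ≤ K / 2 * (‖x - y‖ ^ 2 / ε) +
      η * (4 * K + 4 * ∫ z, hmin (F 0 z) ∂μ) := by
    have h1 : ∫ z, Rf z ∂μ = (1 / (2 * ε)) * (∫ z, ‖F x z - F y z‖ ^ 2 ∂μ) +
        η * ((4 / (1 + ‖x‖ ^ 2)) * (∫ z, ‖F x z - F 0 z‖ ^ 2 ∂μ) + 4 * ∫ z, hmin (F 0 z) ∂μ) := by
      simp only [hRf]
      have hi2 : Integrable (fun z => (4 / (1 + ‖x‖ ^ 2)) * ‖F x z - F 0 z‖ ^ 2 +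
          4 * hmin (F 0 z)) μ := (hD2.const_mul _).add ((hFi 0).const_mul 4)
      rw [integral_add (hD1.const_mul _) (hi2.const_mul η), integral_const_mul,
        integral_const_mul, integral_add (hD2.const_mul _) ((hFi 0).const_mul 4),
        integral_const_mul, integral_const_mul]
    rw [h1]
    have h2 : (1 / (2 * ε)) * (∫ z, ‖F x z - F y z‖ ^ 2 ∂μ) ≤ (1 / (2 * ε)) * (K * ‖x - y‖ ^ 2) := by
      gcongr
    have h3 : (1 / (2 * ε)) * (K * ‖x - y‖ ^ 2) = K / 2 * (‖x - y‖ ^ 2 / ε) := by field_simp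
    have h4 : (4 / (1 + ‖x‖ ^ 2)) * (∫ z, ‖F x z - F 0 z‖ ^ 2 ∂μ) ≤ 4 * K := by
      calc _ ≤ (4 / (1 + ‖x‖ ^ 2)) * (K * ‖x‖ ^ 2) := by gcongr
        _ = 4 * K * (‖x‖ ^ 2 / (1 + ‖x‖ ^ 2)) := by ring
        _ ≤ 4 * K * 1 := by
          gcongr
          rw [div_le_one hx1]; linarith
        _ = 4 * K := by ring
    have h5 : η * ((4 / (1 + ‖x‖ ^ 2)) * (∫ z, ‖F x z - F 0 z‖ ^ 2 ∂μ) + 4 * ∫ z, hmin (F 0 z) ∂μ) ≤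
      η * (4 * K + 4 * ∫ z, hmin (F 0 z) ∂μ) := by gcongr
    linarith
  have hmain : ∀ k : ℕ, lam * (E₁ * v₁ t x - E₂ * v₂ s y) ≤
      (β + K / 2) * (‖x - y‖ ^ 2 / ε) + η * (Mb + 4 * K + 4 * ∫ z, hmin (F 0 z) ∂μ)
      + E₁ * κ₁ + E₂ * κ₂
      + ((1 / ε + 2 * η) * (∫ z in {z | ‖F x z‖ < 1 / ((k : ℝ) + 1)}, hmin (F x z) ∂μ) +
        (1 / ε) * (∫ z in {z | ‖F y z‖ < 1 / ((k : ℝ) + 1)}, hmin (F y z) ∂μ)) := by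
    intro k
    set δ : ℝ := 1 / ((k : ℝ) + 1) with hδ
    have hδ0 : 0 < δ := by positivity
    have hδ1 : δ ≤ 1 := by
      rw [hδ, div_le_one (by positivity)]; linarith [(Nat.cast_nonneg k : (0 : ℝ) ≤ k)]
    have hm : ∀ x, MeasurableSet {z | ‖F x z‖ < δ} := fun x =>
      measurableSet_lt (hF x).norm measurable_const
    set A : Set (En n) := {z | ‖F x z‖ < δ} ∩ {z | ‖F y z‖ < δ} with hAdef
    have hA : MeasurableSet A := (hm x).inter (hm y)
    have hfin : ∀ x, μ {z | ‖F x z‖ < δ}ᶜ < ∞ := by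
      intro x
      refine lt_of_le_of_lt (measure_mono fun z hz => ?_)
        ((hFi x).measure_ge_lt_top (ε := δ ^ 2) (by positivity))
      have hz' : δ ≤ ‖F x z‖ := not_lt.1 hz
      change δ ^ 2 ≤ min _ _
      exact le_min (by nlinarith) (by gcongr)
    have hAf : μ Aᶜ ≠ ∞ := by
      rw [hAdef, Set.compl_inter]
      exact ((measure_union_le _ _).trans_lt (ENNReal.add_lt_top.2 ⟨hfin x, hfin y⟩)).ne
    have hsq : ∀ w, A ⊆ {z | ‖F w z‖ < δ} → IntegrableOn (fun z => ‖F w z‖ ^ 2) A μ ∧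
        ∫ z in A, ‖F w z‖ ^ 2 ∂μ ≤ ∫ z in {z | ‖F w z‖ < δ}, hmin (F w z) ∂μ := by
      intro w hw
      have heq : Set.EqOn (fun z => ‖F w z‖ ^ 2) (fun z => hmin (F w z)) A := fun z hz =>
        sq_eq_hmin (le_trans (le_of_lt (hw hz)) hδ1)
      refine ⟨(hFi w).integrableOn.congr_fun heq.symm hA, ?_⟩
      rw [setIntegral_congr_fun hA heq]
      exact setIntegral_mono_set (hFi w).integrableOn
        (Filter.Eventually.of_forall fun z => hmin_nonneg _) hw.eventuallyLE
    obtain ⟨hAx, hAx'⟩ := hsq x Set.inter_subset_left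
    obtain ⟨hAy, hAy'⟩ := hsq y Set.inter_subset_right
    have hM₂' : ∀ t ∈ Set.Icc (0 : ℝ) T, ∀ x, |(fun t x => -v₂ t x) t x| ≤ M := fun t ht x => by
      simpa using hM₂ t ht x
    have hJ1 := jet_ineq (hF x) (hFi x) v₁ hv₁ hM₁ ht (s₀ := s) (y₀ := y) hε hη
      (fun t' ht' x' => by have := hmax t' ht' s hs x' y; linarith) (b x) κ₁ H₁ hA hAf hAx hP₁
    have hJ2 := jet_ineq (hF y) (hFi y) (fun t x => -v₂ t x) hv₂.neg hM₂' hs (s₀ := t) (y₀ := x)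
      hε le_rfl
      (fun s' hs' y' => by
        have := hmax t ht s' hs' x y'
        rw [norm_sub_rev y' x, norm_sub_rev y x]
        have e1 : (s' - t) ^ 2 = (t - s') ^ 2 := by ring
        have e2 : (s - t) ^ 2 = (t - s) ^ 2 := by ring
        rw [e1, e2]
        linarith) (b y) κ₂ H₂ hA hAf hAy hP₂
    have hI1 := integrableOn_incr (hF x) (hFi x) v₁ hv₁ hM₁ ht x P₁ E₁ (E₁ * v₁ t x) hAf
    have hI2 := integrableOn_incr (hF y) (hFi y) (fun t x => -v₂ t x) hv₂.neg hM₂' hs y P₂ E₂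
      (E₂ * -v₂ s y) hAf
    have hsum : (∫ z in Aᶜ, (E₁ * v₁ t (x + F x z) - E₁ * v₁ t x - ⟪P₁, F x z⟫) ∂μ) +
        (∫ z in Aᶜ, (E₂ * -v₂ s (y + F y z) - E₂ * -v₂ s y - ⟪P₂, F y z⟫) ∂μ) ≤ ∫ z, Rf z ∂μ := by
      rw [← integral_add hI1 hI2]
      calc _ ≤ ∫ z in Aᶜ, Rf z ∂μ := integral_mono (hI1.add hI2) hRi.integrableOn hpt
        _ ≤ ∫ z, Rf z ∂μ := setIntegral_le_integral hRi (Filter.Eventually.of_forall hR0)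
    have h1 : (1 / ε + 2 * η) * (∫ z in A, ‖F x z‖ ^ 2 ∂μ) ≤
      (1 / ε + 2 * η) * (∫ z in {z | ‖F x z‖ < δ}, hmin (F x z) ∂μ) := by gcongr
    have h2 : (1 / ε) * (∫ z in A, ‖F y z‖ ^ 2 ∂μ) ≤
      (1 / ε) * (∫ z in {z | ‖F y z‖ < δ}, hmin (F y z) ∂μ) := by gcongr
    have h3 : (s - t) / ε = - ((t - s) / ε) := by ring
    simp only [mul_zero, add_zero] at hJ2
    linarith
  have hlim := (((tendsto_small_jumps (hF x) (hFi x)).const_mul (1 / ε + 2 * η)).add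
    ((tendsto_small_jumps (hF y) (hFi y)).const_mul (1 / ε))).const_add
      ((β + K / 2) * (‖x - y‖ ^ 2 / ε) + η * (Mb + 4 * K + 4 * ∫ z, hmin (F 0 z) ∂μ)
      + E₁ * κ₁ + E₂ * κ₂)
  simp only [mul_zero, add_zero] at hlim
  exact ge_of_tendsto hlim (Filter.Eventually.of_forall hmain)

/-! ### Comparison principle -/

lemma continuous_psi {n : ℕ} : Continuous (psi : En n → ℝ) := contDiff_psi.continuous

/-- The penalised doubled functional attains its maximum over `([0,T] × ℝⁿ)²`, at a point of a
compact set that does not depend on the penalisation parameter `ε ∈ (0,1]`. -/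
lemma exists_max_doubled {n : ℕ} {T : ℝ} (hT : 0 ≤ T) {V₁ V₂ : ℝ × En n → ℝ}
    (hV₁ : Continuous V₁) (hV₂ : Continuous V₂) {M : ℝ}
    (hM₁ : ∀ p, |V₁ p| ≤ M) (hM₂ : ∀ p, |V₂ p| ≤ M) {η : ℝ} (hη : 0 < η) :
    ∃ R : ℝ, ∀ ε : ℝ, 0 < ε → ε ≤ 1 →
      ∃ r ∈ (Set.Icc 0 T ×ˢ Metric.closedBall (0 : En n) R) ×ˢ
          (Set.Icc 0 T ×ˢ Metric.closedBall (0 : En n) R),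
        ∀ p q : ℝ × En n, p.1 ∈ Set.Icc 0 T → q.1 ∈ Set.Icc 0 T →
          V₁ p - V₂ q - (‖p.2 - q.2‖ ^ 2 + (p.1 - q.1) ^ 2) / (2 * ε) - η * psi p.2 ≤
          V₁ r.1 - V₂ r.2 - (‖r.1.2 - r.2.2‖ ^ 2 + (r.1.1 - r.2.1) ^ 2) / (2 * ε)
            - η * psi r.1.2 := by
  have hM0 : 0 ≤ M := (abs_nonneg _).trans (hM₁ 0)
  set R := Real.exp (4 * M / η) + 8 * M + 1 with hR
  refine ⟨R, fun ε hε hε1 => ?_⟩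
  set Φ : (ℝ × En n) × (ℝ × En n) → ℝ := fun r =>
    V₁ r.1 - V₂ r.2 - (‖r.1.2 - r.2.2‖ ^ 2 + (r.1.1 - r.2.1) ^ 2) / (2 * ε) - η * psi r.1.2
    with hΦ
  have hΦc : Continuous Φ := by
    have := continuous_psi (n := n)
    fun_prop
  set S := (Set.Icc 0 T ×ˢ Metric.closedBall (0 : En n) R) ×ˢ
          (Set.Icc 0 T ×ˢ Metric.closedBall (0 : En n) R) with hS
  have hR0 : 0 ≤ R := by positivity
  have hSc : IsCompact S := by
    have := (isCompact_Icc (a := (0 : ℝ)) (b := T)).prod (isCompact_closedBall (0 : En n) R)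
    exact this.prod this
  have h0S : ((0, 0), (0, 0)) ∈ S := by
    simp [hS, hT, hR0]
  obtain ⟨r, hrS, hr⟩ := hSc.exists_isMaxOn ⟨_, h0S⟩ hΦc.continuousOn
  refine ⟨r, hrS, fun p q hp hq => ?_⟩
  change Φ (p, q) ≤ Φ r
  by_cases hpq : (p, q) ∈ S
  · exact hr hpq
  refine le_trans ?_ (hr h0S)
  have hΦ0 : -(2 * M) ≤ Φ ((0, 0), (0, 0)) := by
    have h1 := abs_le.1 (hM₁ (0, 0))
    have h2 := abs_le.1 (hM₂ (0, 0))
    simp only [hΦ, psi]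
    norm_num
    linarith
  refine le_trans ?_ hΦ0
  by_contra hcon
  push Not at hcon
  apply hpq
  have h1 := abs_le.1 (hM₁ p)
  have h2 := abs_le.1 (hM₂ q)
  have hpen : 0 ≤ (‖p.2 - q.2‖ ^ 2 + (p.1 - q.1) ^ 2) / (2 * ε) := by positivity
  have hpsi := mul_nonneg hη.le (psi_nonneg p.2)
  simp only [hΦ] at hcon
  have h3 : psi p.2 ≤ 4 * M / η := by
    rw [le_div_iff₀ hη]; linarith
  have h4 : 1 + ‖p.2‖ ^ 2 ≤ Real.exp (4 * M / η) := by
    rw [← Real.log_le_iff_le_exp (by positivity)]; exact h3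
  have h5 : ‖p.2‖ ≤ Real.exp (4 * M / η) := by nlinarith [sq_nonneg (‖p.2‖ - 1 / 2)]
  have h6 : (‖p.2 - q.2‖ ^ 2 + (p.1 - q.1) ^ 2) / (2 * ε) ≤ 4 * M := by linarith
  rw [div_le_iff₀ (by positivity)] at h6
  have h7 : ‖p.2 - q.2‖ ^ 2 ≤ 8 * M := by nlinarith [sq_nonneg (p.1 - q.1)]
  have h8 : ‖p.2 - q.2‖ ≤ 8 * M + 1 := by nlinarith [sq_nonneg (‖p.2 - q.2‖ - 1 / 2)]
  have h9 : ‖q.2‖ ≤ ‖p.2‖ + ‖p.2 - q.2‖ := by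
    have := norm_sub_le p.2 (p.2 - q.2)
    simpa using this
  refine ⟨⟨hp, ?_⟩, ⟨hq, ?_⟩⟩
  · rw [mem_closedBall_zero_iff, hR]; linarith
  · rw [mem_closedBall_zero_iff, hR]; linarith

/-- Doubling of variables: along a sequence of penalisation parameters, the maximum points of the
doubled functional converge to a common limit, with the spatial penalisation term vanishing. -/
lemma doubling_limit {n : ℕ} {T : ℝ} (hT : 0 ≤ T) {V₁ V₂ : ℝ × En n → ℝ}
    (hV₁ : Continuous V₁) (hV₂ : Continuous V₂) {M : ℝ}
    (hM₁ : ∀ p, |V₁ p| ≤ M) (hM₂ : ∀ p, |V₂ p| ≤ M) {η σ : ℝ} (hη : 0 < η)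
    {p₀ : ℝ × En n} (hp₀ : p₀.1 ∈ Set.Icc 0 T) (hσ : σ ≤ V₁ p₀ - V₂ p₀ - η * psi p₀.2) :
    ∃ (ε : ℕ → ℝ) (p q : ℕ → ℝ × En n) (a : ℝ × En n),
      (∀ k, 0 < ε k) ∧ (∀ k, (p k).1 ∈ Set.Icc 0 T) ∧ (∀ k, (q k).1 ∈ Set.Icc 0 T) ∧
      a.1 ∈ Set.Icc 0 T ∧
      (∀ k, ∀ p' q' : ℝ × En n, p'.1 ∈ Set.Icc 0 T → q'.1 ∈ Set.Icc 0 T →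
          V₁ p' - V₂ q' - (‖p'.2 - q'.2‖ ^ 2 + (p'.1 - q'.1) ^ 2) / (2 * ε k) - η * psi p'.2 ≤
          V₁ (p k) - V₂ (q k) - (‖(p k).2 - (q k).2‖ ^ 2 + ((p k).1 - (q k).1) ^ 2) / (2 * ε k)
            - η * psi (p k).2) ∧
      Filter.Tendsto p Filter.atTop (nhds a) ∧ Filter.Tendsto q Filter.atTop (nhds a) ∧
      Filter.Tendsto (fun k => ‖(p k).2 - (q k).2‖ ^ 2 / ε k) Filter.atTop (nhds 0) ∧
      σ ≤ V₁ a - V₂ a := by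
  obtain ⟨R, hR⟩ := exists_max_doubled hT hV₁ hV₂ hM₁ hM₂ hη
  have he : ∀ k : ℕ, 0 < 1 / ((k : ℝ) + 1) := fun k => by positivity
  have he1 : ∀ k : ℕ, 1 / ((k : ℝ) + 1) ≤ 1 := fun k => by
    rw [div_le_one (by positivity)]; linarith [(Nat.cast_nonneg k : (0 : ℝ) ≤ k)]
  choose r hrS hr using fun k : ℕ => hR _ (he k) (he1 k)
  have hSc := ((isCompact_Icc (a := (0 : ℝ)) (b := T)).prod (isCompact_closedBall (0 : En n) R))
  obtain ⟨a, haS, θ, hθ, hlim⟩ := (hSc.prod hSc).tendsto_subseq hrS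
  have hp : Filter.Tendsto (fun k => (r (θ k)).1) Filter.atTop (nhds a.1) :=
    (continuous_fst.tendsto a).comp hlim
  have hq : Filter.Tendsto (fun k => (r (θ k)).2) Filter.atTop (nhds a.2) :=
    (continuous_snd.tendsto a).comp hlim
  have hε : Filter.Tendsto (fun k => 1 / (((θ k : ℕ) : ℝ) + 1)) Filter.atTop (nhds 0) :=
    (tendsto_one_div_add_atTop_nhds_zero_nat (𝕜 := ℝ)).comp hθ.tendsto_atTop
  have hlow : ∀ k, σ + (‖(r k).1.2 - (r k).2.2‖ ^ 2 + ((r k).1.1 - (r k).2.1) ^ 2) /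
      (2 * (1 / ((k : ℝ) + 1))) ≤ V₁ (r k).1 - V₂ (r k).2 := by
    intro k
    have h1 := hr k p₀ p₀ hp₀ hp₀
    simp only [sub_self, norm_zero] at h1
    have h2 := mul_nonneg hη.le (psi_nonneg (r k).1.2)
    norm_num at h1 ⊢
    linarith
  have hpen : ∀ k, ‖(r k).1.2 - (r k).2.2‖ ^ 2 + ((r k).1.1 - (r k).2.1) ^ 2 ≤
      (2 * M - σ) * (2 * (1 / ((k : ℝ) + 1))) := by
    intro k
    rw [← div_le_iff₀ (by have := he k; positivity)]
    have h1 := abs_le.1 (hM₁ (r k).1)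
    have h2 := abs_le.1 (hM₂ (r k).2)
    linarith [hlow k]
  have hpc : Continuous fun r : (ℝ × En n) × (ℝ × En n) =>
    ‖r.1.2 - r.2.2‖ ^ 2 + (r.1.1 - r.2.1) ^ 2 := by fun_prop
  have ha0 : ‖a.1.2 - a.2.2‖ ^ 2 + (a.1.1 - a.2.1) ^ 2 ≤ 0 := by
    have h1 := (hpc.tendsto a).comp hlim
    have h2 := (hε.const_mul 2).const_mul (2 * M - σ)
    simp only [mul_zero] at h2
    exact le_of_tendsto_of_tendsto' h1 h2 fun k => hpen (θ k)
  have ha : a.2 = a.1 := by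
    have h1 : ‖a.1.2 - a.2.2‖ = 0 := by
      nlinarith [sq_nonneg ‖a.1.2 - a.2.2‖, sq_nonneg (a.1.1 - a.2.1)]
    have h2 : a.1.1 - a.2.1 = 0 := by
      nlinarith [sq_nonneg ‖a.1.2 - a.2.2‖, sq_nonneg (a.1.1 - a.2.1)]
    rw [norm_eq_zero, sub_eq_zero] at h1
    exact Prod.ext (by linarith) h1.symm
  rw [ha] at hq
  refine ⟨fun k => 1 / (((θ k : ℕ) : ℝ) + 1), fun k => (r (θ k)).1, fun k => (r (θ k)).2, a.1,
    fun k => he _, fun k => (hrS _).1.1, fun k => (hrS _).2.1, haS.1.1, fun k => hr _, hp, hq,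
    ?_, ?_⟩
  · have h1 : Filter.Tendsto (fun k => 2 * (V₂ (r (θ k)).1 - V₂ (r (θ k)).2)) Filter.atTop
        (nhds 0) := by
      have := (((hV₂.tendsto _).comp hp).sub ((hV₂.tendsto _).comp hq)).const_mul 2
      simpa using this
    refine squeeze_zero (fun k => ?_) (fun k => ?_) h1
    · have := he (θ k); positivity
    · have h2 := hr (θ k) (r (θ k)).1 (r (θ k)).1 (hrS _).1.1 (hrS _).1.1
      have h3 := he (θ k)
      simp only [sub_self, norm_zero] at h2
      have h4 : (‖(r (θ k)).1.2 - (r (θ k)).2.2‖ ^ 2 + ((r (θ k)).1.1 - (r (θ k)).2.1) ^ 2) /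
          (2 * (1 / (((θ k : ℕ) : ℝ) + 1))) =
          (1 / 2) * (‖(r (θ k)).1.2 - (r (θ k)).2.2‖ ^ 2 / (1 / (((θ k : ℕ) : ℝ) + 1))) +
          (1 / 2) * (((r (θ k)).1.1 - (r (θ k)).2.1) ^ 2 / (1 / (((θ k : ℕ) : ℝ) + 1))) := by
        field_simp
      have h5 : 0 ≤ ((r (θ k)).1.1 - (r (θ k)).2.1) ^ 2 / (1 / (((θ k : ℕ) : ℝ) + 1)) := by
        positivity
      rw [h4] at h2
      have h6 : ((0 : ℝ) ^ 2 + 0 ^ 2) / (2 * (1 / (((θ k : ℕ) : ℝ) + 1))) = 0 := by simp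
      rw [h6] at h2
      beta_reduce
      linarith
  · have h1 := ((hV₁.tendsto _).comp hp).sub ((hV₂.tendsto _).comp hq)
    refine ge_of_tendsto' h1 fun k => ?_
    have h2 := hlow (θ k)
    have h3 : 0 ≤ (‖(r (θ k)).1.2 - (r (θ k)).2.2‖ ^ 2 + ((r (θ k)).1.1 - (r (θ k)).2.1) ^ 2) /
      (2 * (1 / (((θ k : ℕ) : ℝ) + 1))) := by positivity
    simp only [Function.comp]
    linarith

lemma IsEvolSubsolution.touchBound {n : ℕ} {T : ℝ} {ν : Measure (En n)} {F : En n → En n → En n}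
    {b : En n → En n} {c f φ : ℝ → En n → ℝ} {g : En n → ℝ} {v : ℝ → En n → ℝ}
    (hv : IsEvolSubsolution T ν F b c f φ g v) {t₀ : ℝ} (ht₀ : t₀ ∈ Set.Ico 0 T) {x₀ : En n}
    (h : φ t₀ x₀ < v t₀ x₀) :
    TouchBound T (ν.restrict {(0 : En n)}ᶜ) (F x₀) v t₀ x₀ (b x₀)
      (f t₀ x₀ - c t₀ x₀ * v t₀ x₀) := by
  intro u hu htouch hu0
  have h1 := hv.2.2.2 u hu t₀ ht₀ x₀ htouch hu0
  rw [min_le_iff] at h1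
  rcases h1 with h1 | h1
  · rw [LopEvol] at h1
    rw [hu0] at h1 ⊢
    linarith
  · rw [hu0] at h1
    linarith

lemma IsTestFnEvol.neg {n : ℕ} {u : ℝ → En n → ℝ} (hu : IsTestFnEvol u) :
    IsTestFnEvol (fun t x => -u t x) := by
  obtain ⟨h1, h2, ⟨M, h3⟩, h4, ⟨M', h5⟩, ⟨M'', h6⟩⟩ := hu
  have hf : ∀ t, fderiv ℝ (fun x => -u t x) = fun x => -fderiv ℝ (u t) x := fun t =>
    funext fun x => fderiv_fun_neg
  refine ⟨h1.neg, fun x => (h2 x).neg, ⟨M, fun t x => ?_⟩, fun t => (h4 t).neg,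
    ⟨M', fun t x => ?_⟩, ⟨M'', fun t x => ?_⟩⟩
  · rw [deriv.fun_neg, abs_neg]; exact h3 t x
  · rw [hf, norm_neg]; exact h5 t x
  · rw [hf, fderiv_fun_neg]; exact (ContinuousLinearMap.opNorm_neg _).trans_le (h6 t x)

lemma gradient_fun_neg {n : ℕ} (u : En n → ℝ) (x : En n) :
    gradient (fun x => -u x) x = -gradient u x := by
  simp [gradient, fderiv_fun_neg]

lemma LopEvol_neg {n : ℕ} (ν : Measure (En n)) (F : En n → En n → En n) (b : En n → En n)
    (u : ℝ → En n → ℝ) (t : ℝ) (x : En n) :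
    LopEvol ν F b (fun t x => -u t x) t x = -LopEvol ν F b u t x := by
  simp only [LopEvol, gradient_fun_neg, inner_neg_right, inner_neg_left]
  rw [neg_add, ← integral_neg]
  congr 2
  funext y
  ring

/-- The supersolution property in terms of functions touching `-v` from above. -/
lemma IsEvolSupersolution.touch {n : ℕ} {T : ℝ} {ν : Measure (En n)} {F : En n → En n → En n}
    {b : En n → En n} {c f φ : ℝ → En n → ℝ} {g : En n → ℝ} {v : ℝ → En n → ℝ}
    (hv : IsEvolSupersolution T ν F b c f φ g v) {t₀ : ℝ} (ht₀ : t₀ ∈ Set.Ico 0 T) {x₀ : En n}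
    {u : ℝ → En n → ℝ} (hu : IsTestFnEvol u)
    (htouch : ∀ t ∈ Set.Icc (0 : ℝ) T, ∀ x, -v t x - u t x ≤ -v t₀ x₀ - u t₀ x₀)
    (hu0 : u t₀ x₀ = -v t₀ x₀) :
    -(deriv (fun s => u s x₀) t₀) - LopEvol ν F b u t₀ x₀ ≤ c t₀ x₀ * v t₀ x₀ - f t₀ x₀ ∧
      φ t₀ x₀ ≤ v t₀ x₀ := by
  have h1 := hv.2.2.2 _ hu.neg t₀ ht₀ x₀ (fun t ht x => by linarith [htouch t ht x])
    (by rw [hu0, neg_neg])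
  rw [le_min_iff, LopEvol_neg, deriv.fun_neg, hu0] at h1
  constructor
  · linarith [h1.1]
  · linarith [h1.2]

lemma IsEvolSupersolution.touchBound {n : ℕ} {T : ℝ} {ν : Measure (En n)}
    {F : En n → En n → En n} {b : En n → En n} {c f φ : ℝ → En n → ℝ} {g : En n → ℝ}
    {v : ℝ → En n → ℝ}
    (hv : IsEvolSupersolution T ν F b c f φ g v) {t₀ : ℝ} (ht₀ : t₀ ∈ Set.Ico 0 T) (x₀ : En n) :
    TouchBound T (ν.restrict {(0 : En n)}ᶜ) (F x₀) (fun t x => -v t x) t₀ x₀ (b x₀)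
      (c t₀ x₀ * v t₀ x₀ - f t₀ x₀) :=
  fun _ hu htouch hu0 => (hv.touch ht₀ hu htouch hu0).1

/-- At a point where `v` can be touched from below by a penalisation, the supersolution lies above
the obstacle: otherwise `TouchBound` would hold vacuously with every right-hand side, contradicting
`jet_ineq`. -/
lemma IsEvolSupersolution.obstacle_le {n : ℕ} {T : ℝ} {ν : Measure (En n)}
    {F : En n → En n → En n} {b : En n → En n} {c f φ : ℝ → En n → ℝ} {g : En n → ℝ}
    {v : ℝ → En n → ℝ}
    (hv : IsEvolSupersolution T ν F b c f φ g v) {t₀ : ℝ} (ht₀ : t₀ ∈ Set.Ico 0 T) {x₀ : En n}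
    (hF : Measurable (F x₀))
    (hFi : Integrable (fun y => hmin (F x₀ y)) (ν.restrict {(0 : En n)}ᶜ))
    {lam ε s₀ : ℝ} (hε : 0 < ε) {y₀ : En n}
    (hmax : ∀ t ∈ Set.Icc (0 : ℝ) T, ∀ x,
      Real.exp (lam * t) * -v t x - (‖x - y₀‖ ^ 2 + (t - s₀) ^ 2) / (2 * ε) ≤
      Real.exp (lam * t₀) * -v t₀ x₀ - (‖x₀ - y₀‖ ^ 2 + (t₀ - s₀) ^ 2) / (2 * ε)) :
    φ t₀ x₀ ≤ v t₀ x₀ := by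
  by_contra hcon
  set μ := ν.restrict {(0 : En n)}ᶜ with hμ
  have H : ∀ κ, TouchBound T μ (F x₀) (fun t x => -v t x) t₀ x₀ (b x₀) κ :=
    fun κ _ hu htouch hu0 => absurd (hv.touch ht₀ hu htouch hu0).2 hcon
  obtain ⟨M, hM⟩ := hv.2.1
  set A : Set (En n) := {z | ‖F x₀ z‖ < 1} with hA
  have hAm : MeasurableSet A := measurableSet_lt hF.norm measurable_const
  have hAf : μ Aᶜ ≠ ∞ := by
    refine (lt_of_le_of_lt (measure_mono fun z hz => ?_)
      (hFi.measure_ge_lt_top (ε := 1) one_pos)).ne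
    have hz' : 1 ≤ ‖F x₀ z‖ := not_lt.1 hz
    change (1 : ℝ) ≤ min ‖F x₀ z‖ (‖F x₀ z‖ ^ 2)
    exact le_min hz' (by nlinarith)
  have hA2 : IntegrableOn (fun z => ‖F x₀ z‖ ^ 2) A μ :=
    hFi.integrableOn.congr_fun (fun z hz => (sq_eq_hmin (le_of_lt hz)).symm) hAm
  have hJ := fun κ => jet_ineq hF hFi (fun t x => -v t x) hv.1.neg
    (fun t ht x => by simpa using hM t ht x) ⟨ht₀.1, ht₀.2.le⟩ (lam := lam) (s₀ := s₀) (y₀ := y₀)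
    hε le_rfl (fun t ht x => by have := hmax t ht x; linarith) (b x₀) κ (H κ) hAm hAf hA2 rfl
  have hE := Real.exp_pos (lam * t₀)
  generalize hX : lam * (Real.exp (lam * t₀) * -v t₀ x₀) - _ - _ - _ = X at hJ
  have := hJ ((X - 1) / Real.exp (lam * t₀))
  rw [mul_div_cancel₀ _ hE.ne'] at this
  linarith

/-- Comparison principle, when `min(|F(x,·)|, |F(x,·)|²)` is integrable for every `x`. -/
theorem comparison {n : ℕ} {T : ℝ} (hT : 0 < T) {ν : Measure (En n)} {F : En n → En n → En n}
    (hF : ∀ x, Measurable (F x))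
    (hFi : ∀ x, Integrable (fun y => hmin (F x y)) (ν.restrict {(0 : En n)}ᶜ))
    {K : ℝ} (hK0 : 0 ≤ K)
    (hK : ∀ x₁ x₂ : En n, ∫⁻ y in {(0 : En n)}ᶜ, ENNReal.ofReal (‖F x₁ y - F x₂ y‖ ^ 2) ∂ν
      ≤ ENNReal.ofReal (K * ‖x₁ - x₂‖ ^ 2))
    {b : En n → En n} (hb : ∃ M, ∀ x, ‖b x‖ ≤ M) (hbL : ∃ β : NNReal, LipschitzWith β b)
    {g : En n → ℝ} {c f φ : ℝ → En n → ℝ}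
    (hc : ContinuousOn (fun p : ℝ × En n => c p.1 p.2) (Set.Icc 0 T ×ˢ Set.univ))
    (hf : ContinuousOn (fun p : ℝ × En n => f p.1 p.2) (Set.Icc 0 T ×ˢ Set.univ))
    (hφ : ContinuousOn (fun p : ℝ × En n => φ p.1 p.2) (Set.Icc 0 T ×ˢ Set.univ))
    (hc_bdd : ∃ M, ∀ t ∈ Set.Icc (0 : ℝ) T, ∀ x, |c t x| ≤ M)
    {v₁ v₂ : ℝ → En n → ℝ}
    (hv₁ : IsEvolSubsolution T ν F b c f φ g v₁)
    (hv₂ : IsEvolSupersolution T ν F b c f φ g v₂) :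
    ∀ t ∈ Set.Icc (0 : ℝ) T, ∀ x : En n, v₁ t x ≤ v₂ t x := by
  intro t₀ ht₀ x₀
  by_contra hcon
  push Not at hcon
  obtain ⟨Mb, hMb⟩ := hb
  obtain ⟨β, hβ⟩ := hbL
  obtain ⟨Mc, hMc⟩ := hc_bdd
  obtain ⟨M₁, hM₁⟩ := hv₁.2.1
  obtain ⟨M₂, hM₂⟩ := hv₂.2.1
  set M := max M₁ M₂
  replace hM₁ : ∀ t ∈ Set.Icc (0 : ℝ) T, ∀ x, |v₁ t x| ≤ M := fun t ht x =>
    (hM₁ t ht x).trans (le_max_left _ _)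
  replace hM₂ : ∀ t ∈ Set.Icc (0 : ℝ) T, ∀ x, |v₂ t x| ≤ M := fun t ht x =>
    (hM₂ t ht x).trans (le_max_right _ _)
  have hM0 : 0 ≤ M := (abs_nonneg _).trans (hM₁ t₀ ht₀ x₀)
  have hMc0 : 0 ≤ Mc := (abs_nonneg _).trans (hMc t₀ ht₀ x₀)
  -- `lam + c ≥ 1` makes the equation for `e^{lam t} v` strictly proper
  set lam := Mc + 1 with hlam
  set μ := ν.restrict {(0 : En n)}ᶜ with hμ
  set C' := Mb + 4 * K + 4 * ∫ z, hmin (F 0 z) ∂μ with hC'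
  have hexp : ∀ t ∈ Set.Icc (0 : ℝ) T, Real.exp (lam * t) ≤ Real.exp (lam * T) := fun t ht => by
    have := ht.2
    gcongr
  have hW : ∀ v : ℝ → En n → ℝ,
      ContinuousOn (fun p : ℝ × En n => v p.1 p.2) (Set.Icc 0 T ×ˢ Set.univ) →
      (∀ t ∈ Set.Icc (0 : ℝ) T, ∀ x, |v t x| ≤ M) →
      ∃ V : ℝ × En n → ℝ, Continuous V ∧ (∀ p, |V p| ≤ Real.exp (lam * T) * M) ∧
        ∀ t ∈ Set.Icc (0 : ℝ) T, ∀ x, V (t, x) = Real.exp (lam * t) * v t x := by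
    intro v hv hM
    refine exists_cont_ext hT.le (fun t x => Real.exp (lam * t) * v t x) ?_ ?_
    · exact ContinuousOn.mul (by fun_prop) hv
    · intro t ht x
      rw [abs_mul, abs_of_pos (Real.exp_pos _)]
      exact mul_le_mul (hexp t ht) (hM t ht x) (abs_nonneg _) (Real.exp_pos _).le
  obtain ⟨V₁, hV₁, hV₁M, hV₁e⟩ := hW v₁ hv₁.1 hM₁
  obtain ⟨V₂, hV₂, hV₂M, hV₂e⟩ := hW v₂ hv₂.1 hM₂
  set σ := (V₁ (t₀, x₀) - V₂ (t₀, x₀)) / 2 with hσ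
  have hσ0 : 0 < σ := by
    rw [hσ, hV₁e t₀ ht₀, hV₂e t₀ ht₀, ← mul_sub]
    have := Real.exp_pos (lam * t₀)
    have := sub_pos.2 hcon
    positivity
  obtain ⟨η, hη, hη1, hη2⟩ : ∃ η : ℝ, 0 < η ∧ η * psi x₀ ≤ σ ∧ η * C' < σ := by
    have hψ := psi_nonneg x₀
    have hd : 0 < psi x₀ + |C'| + 1 := by positivity
    refine ⟨σ / (psi x₀ + |C'| + 1), by positivity, ?_, ?_⟩
    · rw [div_mul_eq_mul_div, div_le_iff₀ hd]
      nlinarith [abs_nonneg C']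
    · rw [div_mul_eq_mul_div, div_lt_iff₀ hd]
      nlinarith [le_abs_self C']
  obtain ⟨ε, p, q, a, hε, hp, hq, ha, hmax, hpl, hql, hpen, hσa⟩ :=
    doubling_limit hT.le hV₁ hV₂ hV₁M hV₂M hη (p₀ := (t₀, x₀)) ht₀ (σ := σ) (by
      change σ ≤ _ - η * psi x₀
      linarith)
  have hmax' : ∀ k, ∀ t' ∈ Set.Icc (0 : ℝ) T, ∀ s' ∈ Set.Icc (0 : ℝ) T, ∀ x' y' : En n,
      Real.exp (lam * t') * v₁ t' x' - Real.exp (lam * s') * v₂ s' y'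
        - (‖x' - y'‖ ^ 2 + (t' - s') ^ 2) / (2 * ε k) - η * psi x' ≤
      Real.exp (lam * (p k).1) * v₁ (p k).1 (p k).2 - Real.exp (lam * (q k).1) * v₂ (q k).1 (q k).2
        - (‖(p k).2 - (q k).2‖ ^ 2 + ((p k).1 - (q k).1) ^ 2) / (2 * ε k) - η * psi (p k).2 := by
    intro k t' ht' s' hs' x' y'
    have h1 := hmax k (t', x') (s', y') ht' hs'
    rw [hV₁e t' ht', hV₂e s' hs', ← hV₁e _ (hp k), ← hV₂e _ (hq k)] at *
    exact h1
  have hlim : ∀ (w : ℝ → En n → ℝ) (r : ℕ → ℝ × En n),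
      ContinuousOn (fun p : ℝ × En n => w p.1 p.2) (Set.Icc 0 T ×ˢ Set.univ) →
      (∀ k, (r k).1 ∈ Set.Icc 0 T) → Filter.Tendsto r Filter.atTop (nhds a) →
      Filter.Tendsto (fun k => w (r k).1 (r k).2) Filter.atTop (nhds (w a.1 a.2)) := by
    intro w r hw hr hra
    have h1 : Filter.Tendsto r Filter.atTop (nhdsWithin a (Set.Icc 0 T ×ˢ Set.univ)) :=
      tendsto_nhdsWithin_iff.2 ⟨hra, Filter.Eventually.of_forall fun k => ⟨hr k, trivial⟩⟩
    exact (hw a ⟨ha, trivial⟩).tendsto.comp h1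
  have hE : 0 < Real.exp (lam * a.1) := Real.exp_pos _
  have hdiff : σ ≤ Real.exp (lam * a.1) * (v₁ a.1 a.2 - v₂ a.1 a.2) := by
    rw [mul_sub, ← hV₁e _ ha, ← hV₂e _ ha]
    exact hσa
  have hpos : 0 < v₁ a.1 a.2 - v₂ a.1 a.2 := by
    by_contra h
    push Not at h
    nlinarith
  have haT : a.1 < T := by
    refine lt_of_le_of_ne ha.2 fun h => ?_
    rw [h] at hpos
    linarith [hv₁.2.2.1 a.2, hv₂.2.2.1 a.2]
  have hpT : ∀ᶠ k in Filter.atTop, (p k).1 < T :=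
    ((continuous_fst.tendsto a).comp hpl).eventually_lt_const haT
  have hqT : ∀ᶠ k in Filter.atTop, (q k).1 < T :=
    ((continuous_fst.tendsto a).comp hql).eventually_lt_const haT
  have hobs : ∀ᶠ k in Filter.atTop, φ (q k).1 (q k).2 ≤ v₂ (q k).1 (q k).2 := by
    filter_upwards [hqT] with k hk
    refine hv₂.obstacle_le ⟨(hq k).1, hk⟩ (hF _) (hFi _) (lam := lam) (ε := ε k) (s₀ := (p k).1)
      (y₀ := (p k).2) (hε k) fun t ht x => ?_
    have := hmax' k (p k).1 (hp k) t ht (p k).2 x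
    rw [norm_sub_rev x, norm_sub_rev (q k).2]
    have e1 : (t - (p k).1) ^ 2 = ((p k).1 - t) ^ 2 := by ring
    have e2 : ((q k).1 - (p k).1) ^ 2 = ((p k).1 - (q k).1) ^ 2 := by ring
    rw [e1, e2]
    linarith
  have hφa : φ a.1 a.2 ≤ v₂ a.1 a.2 := le_of_tendsto_of_tendsto (hlim φ q hφ hq hql)
    (hlim v₂ q hv₂.1 hq hql) hobs
  have habove : ∀ᶠ k in Filter.atTop, φ (p k).1 (p k).2 < v₁ (p k).1 (p k).2 :=
    (hlim φ p hφ hp hpl).eventually_lt (hlim v₁ p hv₁.1 hp hpl) (by linarith)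
  have hineq : ∀ᶠ k in Filter.atTop,
      lam * (Real.exp (lam * (p k).1) * v₁ (p k).1 (p k).2 -
        Real.exp (lam * (q k).1) * v₂ (q k).1 (q k).2) ≤
      (β + K / 2) * (‖(p k).2 - (q k).2‖ ^ 2 / ε k) + η * C'
      + Real.exp (lam * (p k).1) *
        (f (p k).1 (p k).2 - c (p k).1 (p k).2 * v₁ (p k).1 (p k).2)
      + Real.exp (lam * (q k).1) *
        (c (q k).1 (q k).2 * v₂ (q k).1 (q k).2 - f (q k).1 (q k).2) := by
    filter_upwards [hpT, hqT, habove] with k hk1 hk2 hk3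
    exact doubling_ineq hF hFi hK0 hK hMb hβ v₁ v₂ hv₁.1 hv₂.1 hM₁ hM₂ (hp k) (hq k) (hε k) hη.le
      (hmax' k) (hv₁.touchBound ⟨(hp k).1, hk1⟩ hk3) (hv₂.touchBound ⟨(hq k).1, hk2⟩ _)
  have hexpc : ContinuousOn (fun p : ℝ × En n => Real.exp (lam * p.1))
      (Set.Icc 0 T ×ˢ Set.univ) := by fun_prop
  have hep := hlim (fun t _ => Real.exp (lam * t)) p hexpc hp hpl
  have heq := hlim (fun t _ => Real.exp (lam * t)) q hexpc hq hql
  have hL := ((hep.mul (hlim v₁ p hv₁.1 hp hpl)).sub (heq.mul (hlim v₂ q hv₂.1 hq hql))).const_mul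
    lam
  have hRt := (((hpen.const_mul ((β : ℝ) + K / 2)).add_const (η * C')).add
    (hep.mul ((hlim f p hf hp hpl).sub ((hlim c p hc hp hpl).mul (hlim v₁ p hv₁.1 hp hpl))))).add
    (heq.mul (((hlim c q hc hq hql).mul (hlim v₂ q hv₂.1 hq hql)).sub (hlim f q hf hq hql)))
  have hfin := le_of_tendsto_of_tendsto hL hRt hineq
  have hca := abs_le.1 (hMc a.1 ha a.2)
  have h1 : (lam + c a.1 a.2) * (Real.exp (lam * a.1) * (v₁ a.1 a.2 - v₂ a.1 a.2)) ≤ η * C' := by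
    linarith
  have h2 : 1 ≤ lam + c a.1 a.2 := by linarith
  nlinarith

/-! ### Non-integrable jumps -/

/-- The function `√(1 + |x|²)`: smooth, of linear growth at infinity and quadratic at `0`. -/
def jap {n : ℕ} (x : En n) : ℝ := Real.sqrt (1 + ‖x‖ ^ 2)

lemma one_le_jap {n : ℕ} (x : En n) : 1 ≤ jap x :=
  Real.one_le_sqrt.2 (by nlinarith [norm_nonneg x])

lemma jap_zero {n : ℕ} : jap (0 : En n) = 1 := by simp [jap]

lemma norm_le_jap {n : ℕ} (x : En n) : ‖x‖ ≤ jap x :=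
  Real.le_sqrt_of_sq_le (by linarith)

lemma contDiff_jap {n : ℕ} : ContDiff ℝ 2 (jap : En n → ℝ) := by
  unfold jap
  exact (contDiff_const.add (contDiff_norm_sq ℝ)).sqrt fun x => by positivity

lemma hasFDerivAt_jap {n : ℕ} (x : En n) :
    HasFDerivAt jap ((jap x)⁻¹ • innerSL ℝ x) x := by
  have h1 := ((hasStrictFDerivAt_norm_sq x).hasFDerivAt.const_add 1).sqrt
    (by positivity : (1 : ℝ) + ‖x‖ ^ 2 ≠ 0)
  refine h1.congr_fderiv ?_
  ext z
  simp [jap]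
  ring

lemma norm_fderiv_jap_le {n : ℕ} (x : En n) : ‖fderiv ℝ (jap : En n → ℝ) x‖ ≤ 1 := by
  rw [(hasFDerivAt_jap x).fderiv, norm_smul, innerSL_apply_norm, norm_inv, Real.norm_eq_abs,
    abs_of_pos (by linarith [one_le_jap x]), inv_mul_le_iff₀ (by linarith [one_le_jap x]), mul_one]
  exact norm_le_jap x

lemma abs_jap_sub_le {n : ℕ} (x y : En n) : |jap x - jap y| ≤ ‖x - y‖ := by
  have := convex_univ.norm_image_sub_le_of_norm_fderiv_le (𝕜 := ℝ) (f := (jap : En n → ℝ))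
    (C := 1) (x := y) (y := x) (fun z _ => (hasFDerivAt_jap z).differentiableAt)
    (fun z _ => norm_fderiv_jap_le z) trivial trivial
  simpa using this

lemma lipschitz_fderiv_jap {n : ℕ} : LipschitzWith 2 (fderiv ℝ (jap : En n → ℝ)) := by
  refine LipschitzWith.of_dist_le_mul fun x y => ?_
  have hx := one_le_jap x
  have hy := one_le_jap y
  have hx0 : 0 < jap x := by linarith
  have hy0 : 0 < jap y := by linarith
  rw [dist_eq_norm, dist_eq_norm, (hasFDerivAt_jap x).fderiv, (hasFDerivAt_jap y).fderiv]
  have h1 : (jap x)⁻¹ • innerSL ℝ x - (jap y)⁻¹ • innerSL ℝ y =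
      innerSL ℝ ((jap x)⁻¹ • (x - y) + ((jap y - jap x) * ((jap x)⁻¹ * (jap y)⁻¹)) • y) := by
    rw [← map_smul, ← map_smul, ← map_sub]
    congr 1
    have : (jap y - jap x) * ((jap x)⁻¹ * (jap y)⁻¹) = (jap x)⁻¹ - (jap y)⁻¹ := by
      field_simp
    rw [this, smul_sub, sub_smul]
    abel
  rw [h1, innerSL_apply_norm]
  have h2 : (jap x)⁻¹ ≤ 1 := inv_le_one_of_one_le₀ hx
  have h3 : (jap y)⁻¹ * ‖y‖ ≤ 1 := by
    rw [inv_mul_le_iff₀ hy0, mul_one]; exact norm_le_jap y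
  have h4 := abs_jap_sub_le y x
  rw [norm_sub_rev] at h4
  calc _ ≤ ‖(jap x)⁻¹ • (x - y)‖ + ‖((jap y - jap x) * ((jap x)⁻¹ * (jap y)⁻¹)) • y‖ :=
        norm_add_le _ _
    _ = (jap x)⁻¹ * ‖x - y‖ + |jap y - jap x| * ((jap x)⁻¹ * ((jap y)⁻¹ * ‖y‖)) := by
        rw [norm_smul, norm_smul, Real.norm_eq_abs, Real.norm_eq_abs, abs_mul,
          abs_of_pos (inv_pos.2 hx0), abs_of_pos (mul_pos (inv_pos.2 hx0) (inv_pos.2 hy0))]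
        ring
    _ ≤ 1 * ‖x - y‖ + ‖x - y‖ * (1 * 1) := by gcongr
    _ = _ := by simp; ring

lemma hmin_le_jap {n : ℕ} (z : En n) : hmin z ≤ 3 * (jap z - 1) := by
  have h0 := hmin_nonneg z
  have h1 : hmin z ≤ ‖z‖ := min_le_left _ _
  have h2 : hmin z ≤ ‖z‖ ^ 2 := min_le_right _ _
  have h3 : 1 + hmin z / 3 ≤ jap z := Real.le_sqrt_of_sq_le (by nlinarith)
  linarith

lemma IsTestFnEvol.add_jap {n : ℕ} {u : ℝ → En n → ℝ} (hu : IsTestFnEvol u) (x₀ : En n) :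
    IsTestFnEvol (fun t x => u t x + (jap (x - x₀) - 1)) ∧
      ∀ t x, fderiv ℝ (fun x => u t x + (jap (x - x₀) - 1)) x =
        fderiv ℝ (u t) x + fderiv ℝ jap (x - x₀) := by
  obtain ⟨h1, h2, ⟨M, h3⟩, h4, ⟨M', h5⟩, ⟨M'', h6⟩⟩ := hu
  have hj : Continuous (jap : En n → ℝ) := contDiff_jap.continuous
  have hf : ∀ t, fderiv ℝ (fun x => u t x + (jap (x - x₀) - 1)) =
      fun x => fderiv ℝ (u t) x + fderiv ℝ jap (x - x₀) := fun t => by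
    funext x
    have ha : HasFDerivAt (u t) (fderiv ℝ (u t) x) x :=
      ((h4 t).differentiable (by norm_num) x).hasFDerivAt
    have hb : HasFDerivAt (fun x => jap (x - x₀)) (fderiv ℝ jap (x - x₀)) x := by
      rw [hasFDerivAt_comp_sub]
      exact (hasFDerivAt_jap _).differentiableAt.hasFDerivAt
    exact (ha.add (hb.sub_const 1)).fderiv
  refine ⟨⟨?_, fun x => (h2 x).add_const _, ⟨M, fun t x => ?_⟩, fun t => ?_,
    ⟨M' + 1, fun t x => ?_⟩, ⟨M'' + 2, fun t x => ?_⟩⟩, fun t x => by rw [hf]⟩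
  · fun_prop
  · rw [deriv_add_const]; exact h3 t x
  · exact (h4 t).add ((contDiff_jap.comp (contDiff_id.sub contDiff_const)).sub contDiff_const)
  · rw [hf]
    exact (norm_add_le _ _).trans (add_le_add (h5 t x) (norm_fderiv_jap_le _))
  · rw [hf]
    have ha : DifferentiableAt ℝ (fderiv ℝ (u t)) x :=
      ((h4 t).fderiv_right (m := 1) (by norm_num)).differentiable (by norm_num) x
    have hb : DifferentiableAt ℝ (fun x => fderiv ℝ (jap : En n → ℝ) (x - x₀)) x :=
      (((contDiff_jap.fderiv_right (m := 1) (by norm_num)).comp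
        (contDiff_id.sub contDiff_const)).differentiable (by norm_num)) x
    rw [fderiv_fun_add ha hb]
    have hl : LipschitzWith 2 (fun x => fderiv ℝ (jap : En n → ℝ) (x - x₀)) := by
      refine LipschitzWith.of_dist_le_mul fun y z => ?_
      have := lipschitz_fderiv_jap.dist_le_mul (y - x₀) (z - x₀)
      simpa using this
    exact (ContinuousLinearMap.opNorm_add_le _ _).trans
      (add_le_add (h6 t x) (norm_fderiv_le_of_lipschitz ℝ hl))

/-- If `min(|F(x₀,·)|, |F(x₀,·)|²)` is not `ν`-integrable, every test function can be raised away
from `x₀`, with the same first order jet at `x₀`, so that its nonlocal integrand at `x₀` is not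
integrable; the Bochner integral in `LopEvol` is then `0` and only the drift remains. -/
lemma exists_touch_drift {n : ℕ} {ν : Measure (En n)} {F : En n → En n → En n}
    (b : En n → En n) {x₀ : En n} (hF : Measurable (F x₀))
    (hFi : ¬ Integrable (fun y => hmin (F x₀ y)) (ν.restrict {(0 : En n)}ᶜ))
    {u : ℝ → En n → ℝ} (hu : IsTestFnEvol u) (t₀ : ℝ) :
    ∃ u' : ℝ → En n → ℝ, IsTestFnEvol u' ∧ (∀ t x, u t x ≤ u' t x) ∧ u' t₀ x₀ = u t₀ x₀ ∧
      deriv (fun s => u' s x₀) t₀ = deriv (fun s => u s x₀) t₀ ∧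
      LopEvol ν F b u' t₀ x₀ = LopEvol 0 F b u t₀ x₀ := by
  set μ := ν.restrict {(0 : En n)}ᶜ with hμ
  have h0 : LopEvol 0 F b u t₀ x₀ = ⟪b x₀, gradient (u t₀) x₀⟫ := by simp [LopEvol]
  by_cases hi : Integrable (fun y => u t₀ (x₀ + F x₀ y) - u t₀ x₀ -
      ⟪gradient (u t₀) x₀, F x₀ y⟫) μ
  · obtain ⟨hu', hfd⟩ := hu.add_jap x₀
    have hgr : gradient (fun x => u t₀ x + (jap (x - x₀) - 1)) x₀ = gradient (u t₀) x₀ := by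
      have : fderiv ℝ (jap : En n → ℝ) 0 = 0 := by
        rw [(hasFDerivAt_jap 0).fderiv]; simp
      simp only [gradient]
      rw [hfd, sub_self, this, add_zero]
    refine ⟨_, hu', fun t x => ?_, ?_, ?_, ?_⟩
    · linarith [one_le_jap (x - x₀)]
    · simp [jap_zero]
    · simp only [deriv_add_const]
    · rw [h0, LopEvol]
      simp only [hgr]
      rw [← hμ, integral_undef, add_zero]
      intro hi'
      apply hFi
      have h3 : Integrable (fun y => 3 * (jap (F x₀ y) - 1)) μ := by
        refine ((hi'.sub hi).const_mul 3).congr (Filter.Eventually.of_forall fun y => ?_)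
        simp [jap_zero]
      refine Integrable.mono' h3 (continuous_hmin.measurable.comp hF).aestronglyMeasurable
        (Filter.Eventually.of_forall fun y => ?_)
      rw [Real.norm_eq_abs, abs_of_nonneg (hmin_nonneg _)]
      exact hmin_le_jap _
  · refine ⟨u, hu, fun _ _ => le_rfl, rfl, rfl, ?_⟩
    rw [h0, LopEvol, ← hμ, integral_undef hi, add_zero]

lemma IsEvolSubsolution.drift {n : ℕ} {T : ℝ} {ν : Measure (En n)} {F : En n → En n → En n}
    {b : En n → En n} {c f φ : ℝ → En n → ℝ} {g : En n → ℝ} {v : ℝ → En n → ℝ}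
    (hF : ∀ x, Measurable (F x))
    (hFi : ∀ x, ¬ Integrable (fun y => hmin (F x y)) (ν.restrict {(0 : En n)}ᶜ))
    (hv : IsEvolSubsolution T ν F b c f φ g v) : IsEvolSubsolution T 0 F b c f φ g v := by
  refine ⟨hv.1, hv.2.1, hv.2.2.1, fun u hu t₀ ht₀ x₀ htouch hu0 => ?_⟩
  obtain ⟨u', hu', hle, heq, hd, hL⟩ := exists_touch_drift b (hF x₀) (hFi x₀) hu t₀
  have h1 := hv.2.2.2 u' hu' t₀ ht₀ x₀
    (fun t ht x => by rw [heq]; linarith [htouch t ht x, hle t x]) (heq.trans hu0)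
  rwa [hd, hL, heq] at h1

lemma IsEvolSupersolution.drift {n : ℕ} {T : ℝ} {ν : Measure (En n)} {F : En n → En n → En n}
    {b : En n → En n} {c f φ : ℝ → En n → ℝ} {g : En n → ℝ} {v : ℝ → En n → ℝ}
    (hF : ∀ x, Measurable (F x))
    (hFi : ∀ x, ¬ Integrable (fun y => hmin (F x y)) (ν.restrict {(0 : En n)}ᶜ))
    (hv : IsEvolSupersolution T ν F b c f φ g v) : IsEvolSupersolution T 0 F b c f φ g v := by
  refine ⟨hv.1, hv.2.1, hv.2.2.1, fun u hu t₀ ht₀ x₀ htouch hu0 => ?_⟩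
  obtain ⟨u', hu', hle, heq, hd, hL⟩ := exists_touch_drift b (hF x₀) (hFi x₀) hu.neg t₀
  have h1 := hv.2.2.2 _ hu'.neg t₀ ht₀ x₀
    (fun t ht x => by rw [heq]; linarith [htouch t ht x, hle t x]) (by rw [heq, neg_neg, hu0])
  rwa [deriv.fun_neg, hd, deriv.fun_neg, LopEvol_neg, hL, LopEvol_neg, heq, neg_neg, neg_neg,
    neg_neg] at h1

lemma integrable_hmin_of_integrable {n : ℕ} {μ : Measure (En n)} {F : En n → En n → En n}
    (hF : ∀ x, Measurable (F x)) {K : ℝ} (hK0 : 0 ≤ K)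
    (hK : ∀ x₁ x₂ : En n, ∫⁻ y, ENNReal.ofReal (‖F x₁ y - F x₂ y‖ ^ 2) ∂μ
      ≤ ENNReal.ofReal (K * ‖x₁ - x₂‖ ^ 2)) {x₁ : En n}
    (h : Integrable (fun y => hmin (F x₁ y)) μ) (x₂ : En n) :
    Integrable (fun y => hmin (F x₂ y)) μ := by
  obtain ⟨hD, -⟩ := integrable_diff_sq ((hF x₂).sub (hF x₁)) (by positivity) (hK x₂ x₁)
  refine Integrable.mono' ((h.const_mul 4).add (hD.const_mul 4))
    (continuous_hmin.measurable.comp (hF x₂)).aestronglyMeasurable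
    (Filter.Eventually.of_forall fun y => ?_)
  rw [Real.norm_eq_abs, abs_of_nonneg (hmin_nonneg _)]
  have := hmin_add_le (F x₁ y) (F x₂ y - F x₁ y)
  rw [add_sub_cancel] at this
  simpa using this

/-! ### Uniqueness -/

/-- Uniqueness for the evolution obstacle problem: under Assumption (Coefficients),
with `g` bounded continuous, `c, f, φ` continuous on `[0,T] × ℝⁿ` and `c` bounded, the
compatibility condition `g ≥ φ(T,·)`, and `lim_{y→0} F(x,y) = 0`, the problem
`min{−w_t − Lw + c w − f, w − φ} = 0` on `[0,T) × ℝⁿ` with final condition `w(T,·) = g`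
has at most one bounded viscosity solution. -/
theorem uniqueness_evolution
    (n : ℕ) (T : ℝ) (hT : 0 < T) (ν : Measure (En n)) [SigmaFinite ν]
    (F : En n → En n → En n) (b : En n → En n) (ρ : En n → ℝ) (K : ℝ)
    (hcoeff : CoefficientsAssumption ν F b ρ K)
    (g : En n → ℝ) (hg : Continuous g) (hg_bdd : ∃ M, ∀ x, |g x| ≤ M)
    (c f φ : ℝ → En n → ℝ)
    (hc : ContinuousOn (fun p : ℝ × En n => c p.1 p.2) (Set.Icc 0 T ×ˢ Set.univ))
    (hf : ContinuousOn (fun p : ℝ × En n => f p.1 p.2) (Set.Icc 0 T ×ˢ Set.univ))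
    (hφ : ContinuousOn (fun p : ℝ × En n => φ p.1 p.2) (Set.Icc 0 T ×ˢ Set.univ))
    (hc_bdd : ∃ M, ∀ t ∈ Set.Icc (0 : ℝ) T, ∀ x, |c t x| ≤ M)
    (hcompat : ∀ x, φ T x ≤ g x)
    (hFlim : ∀ x : En n,
      Filter.Tendsto (F x) (nhdsWithin 0 {(0 : En n)}ᶜ) (nhds 0))
    (v₁ v₂ : ℝ → En n → ℝ)
    (hv₁ : IsEvolSolution T ν F b c f φ g v₁)
    (hv₂ : IsEvolSolution T ν F b c f φ g v₂) :
    ∀ t ∈ Set.Icc (0 : ℝ) T, ∀ x : En n, v₁ t x = v₂ t x := by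
  suffices H : ∀ v₁ v₂ : ℝ → En n → ℝ, IsEvolSubsolution T ν F b c f φ g v₁ →
      IsEvolSupersolution T ν F b c f φ g v₂ →
      ∀ t ∈ Set.Icc (0 : ℝ) T, ∀ x : En n, v₁ t x ≤ v₂ t x from
    fun t ht x => le_antisymm (H v₁ v₂ hv₁.1 hv₂.2 t ht x) (H v₂ v₁ hv₂.1 hv₁.2 t ht x)
  intro w₁ w₂ hw₁ hw₂
  obtain ⟨hK0, hFm, -, -, hK, -, -, hb, hbL⟩ := hcoeff
  have hF : ∀ x, Measurable (F x) := fun x => hFm.comp measurable_prodMk_left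
  by_cases h0 : Integrable (fun y => hmin (F 0 y)) (ν.restrict {(0 : En n)}ᶜ)
  · exact comparison hT hF (integrable_hmin_of_integrable hF hK0.le hK h0) hK0.le hK hb hbL
      hc hf hφ hc_bdd hw₁ hw₂
  · have hFi : ∀ x, ¬ Integrable (fun y => hmin (F x y)) (ν.restrict {(0 : En n)}ᶜ) := fun x h =>
      h0 (integrable_hmin_of_integrable hF hK0.le hK h 0)
    exact comparison hT (ν := 0) hF (fun x => by simp) le_rfl (fun _ _ => by simp) hb hbL
      hc hf hφ hc_bdd (hw₁.drift hF hFi) (hw₂.drift hF hFi)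

end
end

section
/- Let C, β, c₀ > 0, let r ∈ (0,1), and let D ∈ ℝ. If D ≤ C ( r (e^{(β − c₀) T} + 1) + e^{−c₀ T} ) for every T > 0, then D ≤ 3 C r^{min(1, c₀/β)}. -/
/-- Bookkeeping lemma for the Hölder estimate: if
`D ≤ C (r (e^{(β−c₀)T} + 1) + e^{−c₀T})` for every `T > 0`, then
`D ≤ 3 C r^{min(1, c₀/β)}`. -/
theorem holder_bookkeeping (C β c₀ r D : ℝ) (hC : 0 < C) (hβ : 0 < β) (hc₀ : 0 < c₀)
    (hr0 : 0 < r) (hr1 : r < 1)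
    (hD : ∀ T : ℝ, 0 < T →
      D ≤ C * (r * (Real.exp ((β - c₀) * T) + 1) + Real.exp (-c₀ * T))) :
    D ≤ 3 * C * r ^ min 1 (c₀ / β) := by
  -- The horizon `T = -log r / β` balances the two exponentials: each term equals `r ^ (c₀ / β)`,
  -- so the bound becomes `C * (r + 2 * r ^ (c₀ / β))`.
  have hlog : Real.log r < 0 := Real.log_neg hr0 hr1
  have h := hD (-Real.log r / β) (div_pos (neg_pos.mpr hlog) hβ)
  have h1 : Real.exp (-c₀ * (-Real.log r / β)) = r ^ (c₀ / β) := by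
    rw [Real.rpow_def_of_pos hr0]
    congr 1
    ring
  have h2 : r * Real.exp ((β - c₀) * (-Real.log r / β)) = r ^ (c₀ / β) := by
    nth_rewrite 1 [← Real.exp_log hr0]
    rw [Real.rpow_def_of_pos hr0, ← Real.exp_add]
    congr 1
    field_simp
    ring
  have h3 : r ^ (c₀ / β) ≤ r ^ min 1 (c₀ / β) :=
    Real.rpow_le_rpow_of_exponent_ge hr0 hr1.le (min_le_right _ _)
  have h4 : r ≤ r ^ min 1 (c₀ / β) := by
    simpa using Real.rpow_le_rpow_of_exponent_ge hr0 hr1.le (min_le_left 1 (c₀ / β))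
  rw [mul_add r, h1, h2, mul_one] at h
  calc D ≤ C * (r ^ (c₀ / β) + r + r ^ (c₀ / β)) := h
    _ ≤ C * (3 * r ^ min 1 (c₀ / β)) := mul_le_mul_of_nonneg_left (by linarith) hC.le
    _ = 3 * C * r ^ min 1 (c₀ / β) := by ring
end

section
/- Let C > 0, G ≥ 0, M ≥ 0, Y < 2, and let ν_CGMY be the measure on ℝ\{0} with density f(x) = C |x|^{−1−Y} (e^{−G|x|} 𝟙_{x<0} + e^{−M|x|} 𝟙_{x>0}) with respect to Lebesgue measure. If either M > 1, or M = 1 and 0 < Y < 2, then ∫_{{|x| ≥ 1}} e^x ν_CGMY(dx) < ∞. -/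
/-! After unfolding the density, the claim is integrability of `e^x f(x)` over `|x| ≥ 1` for Lebesgue
measure. On `x ≥ 1` the product is `C x^(-1-Y) e^{-(M-1)x}`: exponentially decaying if `M > 1`, and a
power with exponent below `-1` if `M = 1` and `Y > 0`. On `x ≤ -1`, writing `t = -x`, it is
`C t^(-1-Y) e^{-(G+1)t}`, which always decays exponentially. -/

open MeasureTheory

/-- The Lévy measure of the CGMY/KoBoL process with parameters `C, G, M, Y`. -/
noncomputable def nuCGMY (C G M Y : ℝ) : Measure ℝ :=
  volume.withDensity (fun x =>
    ENNReal.ofReal (C * |x| ^ (-1 - Y) *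
      (if x < 0 then Real.exp (-G * |x|) else if 0 < x then Real.exp (-M * |x|) else 0)))

/-- Away from the origin, exponential decay absorbs every real power, including those that are
not integrable at `0`. -/
lemma integrableOn_rpow_mul_exp_Ici_one (p b : ℝ) (hb : 0 < b) :
    IntegrableOn (fun x : ℝ => x ^ p * Real.exp (-b * x)) (Set.Ici 1) := by
  have h := integrableOn_rpow_mul_exp_neg_mul_rpow (p := 1) (s := max p 0) (b := b)
    (lt_of_lt_of_le (by norm_num) (le_max_right p 0)) one_pos hb
  have h1 := h.mono_set (Set.Ici_subset_Ioi.2 one_pos : Set.Ici (1 : ℝ) ⊆ Set.Ioi 0)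
  refine Integrable.mono' h1 (by fun_prop) ?_
  filter_upwards [ae_restrict_mem measurableSet_Ici] with x hx
  have hx : (1 : ℝ) ≤ x := hx
  have hx0 : 0 ≤ x := by linarith
  rw [Real.norm_of_nonneg (by positivity), Real.rpow_one]
  gcongr
  exact le_max_left p 0

/-- Exponential-moment condition for the CGMY Lévy measure: if `M > 1`, or `M = 1` and
`0 < Y < 2`, then `∫_{|x| ≥ 1} e^x ν_CGMY(dx) < ∞`. -/
theorem cgmy_exponential_moment (C G M Y : ℝ) (hC : 0 < C) (hG : 0 ≤ G) (hM : 0 ≤ M)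
    (hY : Y < 2) (hcond : 1 < M ∨ (M = 1 ∧ 0 < Y)) :
    IntegrableOn (fun x => Real.exp x) {x : ℝ | 1 ≤ |x|} (nuCGMY C G M Y) := by
  have hmeas : Measurable (fun x : ℝ => ENNReal.ofReal (C * |x| ^ (-1 - Y) *
      (if x < 0 then Real.exp (-G * |x|) else if 0 < x then Real.exp (-M * |x|) else 0))) := by
    refine Measurable.ennreal_ofReal (Measurable.mul (by fun_prop) ?_)
    exact Measurable.ite measurableSet_Iio (by fun_prop)
      (Measurable.ite measurableSet_Ioi (by fun_prop) measurable_const)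
  have hset : {x : ℝ | 1 ≤ |x|} = Set.Iic (-1) ∪ Set.Ici 1 := by
    ext x
    simp only [Set.mem_ofPred_eq, Set.mem_union, Set.mem_Iic, Set.mem_Ici, le_abs]
    constructor
    · rintro (h | h)
      · exact Or.inr h
      · exact Or.inl (by linarith)
    · rintro (h | h)
      · exact Or.inr (by linarith)
      · exact Or.inl h
  rw [hset, integrableOn_union]
  unfold nuCGMY
  constructor
  · rw [IntegrableOn, restrict_withDensity measurableSet_Iic,
      integrable_withDensity_iff hmeas (by simp)]
    have h := (integrableOn_rpow_mul_exp_Ici_one (-1 - Y) (G + 1) (by linarith)).const_mul C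
    have h' : IntegrableOn (fun x : ℝ => C * ((-x) ^ (-1 - Y) * Real.exp (-(G + 1) * (-x))))
        (Set.Iic (-1)) := by
      have h2 := (Measure.measurePreserving_neg (volume : Measure ℝ)).integrableOn_comp_preimage
        (Homeomorph.neg ℝ).measurableEmbedding (s := Set.Ici 1)
        (f := fun x : ℝ => C * (x ^ (-1 - Y) * Real.exp (-(G + 1) * x)))
      have h3 := h2.2 h
      simpa [Function.comp_def] using h3
    refine h'.congr ?_
    filter_upwards [ae_restrict_mem measurableSet_Iic] with x hx
    have hx : x ≤ -1 := hx
    have hx0 : x < 0 := by linarith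
    rw [ENNReal.toReal_ofReal (by rw [if_pos hx0]; positivity), if_pos hx0, abs_of_neg hx0,
      show -(G + 1) * -x = x + -G * -x by ring, Real.exp_add]
    ring
  · rw [IntegrableOn, restrict_withDensity measurableSet_Ici,
      integrable_withDensity_iff hmeas (by simp)]
    have h : IntegrableOn (fun x : ℝ => x ^ (-1 - Y) * Real.exp (-(M - 1) * x)) (Set.Ici 1) := by
      rcases hcond with h | ⟨rfl, h⟩
      · exact integrableOn_rpow_mul_exp_Ici_one _ _ (by linarith)
      · rw [integrableOn_Ici_iff_integrableOn_Ioi]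
        simpa using integrableOn_Ioi_rpow_of_lt (a := -1 - Y) (c := 1) (by linarith) one_pos
    refine (h.const_mul C).congr ?_
    filter_upwards [ae_restrict_mem measurableSet_Ici] with x hx
    have hx : (1 : ℝ) ≤ x := hx
    have hx0 : 0 < x := by linarith
    rw [ENNReal.toReal_ofReal (by rw [if_neg hx0.not_gt, if_pos hx0]; positivity),
      if_neg hx0.not_gt, if_pos hx0, abs_of_pos hx0,
      show -(M - 1) * x = x + -M * x by ring, Real.exp_add]
    ring
end
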